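/- arXiv:2103.06207 — 4 statements merged into one kernel-verified Lean document; each statement's English description precedes it below -/
import Mathlib

section
/- Let h ≥ 0 entrywise with ĥ = min_i h_i > 0. Then ‖m − tanh(h + Jm)‖_∞ ≤ (‖J‖_{1,∞}/ĥ) · (3 + ‖J‖_{∞,∞} + log(1 + ‖J‖_{∞,∞}/ĥ)). -/
/-!
The diagonal couplings contribute a constant to `H`, so with the local field `X = ∑_{j ≠ i} J_ij σ_j`
flipping the spin at `i` gives Callen's identity `m_i = ⟨tanh (h_i + X)⟩` (`callen`). Expanding `tanh`
to second order around `h_i + ⟨X⟩` (`tanh_taylor`), the linear term averages to zero and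
`|m_i - tanh (h_i + ⟨X⟩)| ≤ Var X`. The remaining diagonal term `J_ii m_i` costs at most
`‖J‖_{1,∞} / ĥ`, because `tanh' x ≤ 1 / x` for `x > 0`.

The variance is controlled by correlation inequalities. Put `Y = ∑ h_k σ_k`. Since
`J_ik ≤ (‖J‖_{1,∞} / ĥ) h_k`, the second Griffiths inequality (`cov_nonneg`) gives
`Var X ≤ (‖J‖_{1,∞} / ĥ) Cov (X, Y)`. Now `Cov (X, Y)` is the derivative at `t = 1` of
`t ↦ ⟨X⟩_{t h}`, which is concave on `[0, ∞)` by the Griffiths-Hurst-Sherman inequality (`ghs`) and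
nonnegative at `0`; hence `Cov (X, Y) ≤ ⟨X⟩ ≤ ‖J‖_{∞,∞}` (`cov_field_le`). In total
`|m_i - tanh (h_i + (J m)_i)| ≤ (‖J‖_{1,∞} / ĥ) (1 + ‖J‖_{∞,∞})`, which is stronger than the claim:
the logarithm is nonnegative and not needed.

Both correlation inequalities follow from the four-copy method of Ellis and Monroe. In the rotated
variables `rot c`, the total energy of four independent copies is a polynomial with nonnegative
coefficients (`posCone_energy`), while monomials in these variables have nonnegative sums over each
site (`site_nonneg`). Expanding the exponential, every polynomial with nonnegative coefficients
has a nonnegative four-copy expectation (`four_copy_nonneg`).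
-/
open scoped NNReal

/-! ### The cone of polynomials in the rotated variables -/

/-- The spin value `±1` encoded by a Boolean. -/
def spn (b : Bool) : ℝ := if b then 1 else -1

/-- The spins of four copies of the system at one site, grouped into two pairs. -/
abbrev Quad := (Bool × Bool) × (Bool × Bool)

/-- Twice the orthogonal transform of Ellis and Monroe applied to the four spins at a site. -/
def rot (c : Fin 4) (s : Quad) : ℝ :=
  ![spn s.1.1 + spn s.1.2 + spn s.2.1 + spn s.2.2,
    spn s.1.1 + spn s.1.2 - spn s.2.1 - spn s.2.2,
    spn s.1.1 - spn s.1.2 + spn s.2.1 - spn s.2.2,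
    -spn s.1.1 + spn s.1.2 + spn s.2.1 - spn s.2.2] c

lemma rot_zero (s : Quad) : rot 0 s = spn s.1.1 + spn s.1.2 + spn s.2.1 + spn s.2.2 := rfl
lemma rot_one (s : Quad) : rot 1 s = spn s.1.1 + spn s.1.2 - spn s.2.1 - spn s.2.2 := rfl
lemma rot_two (s : Quad) : rot 2 s = spn s.1.1 - spn s.1.2 + spn s.2.1 - spn s.2.2 := rfl
lemma rot_three (s : Quad) : rot 3 s = -spn s.1.1 + spn s.1.2 + spn s.2.1 - spn s.2.2 := rfl

/-- The sixteen values of `rot` are `±4` on each axis together with the eight vectors with entries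
`±2` of positive product. Hence the sum of a monomial over them either cancels or has only
nonnegative contributions, according to the parities of the exponents. -/
lemma site_nonneg (d : Fin 4 → ℕ) : 0 ≤ ∑ s : Quad, ∏ c, rot c s ^ d c := by
  simp only [Fintype.sum_prod_type, Fintype.sum_bool, Fin.prod_univ_four, rot_zero, rot_one,
    rot_two, rot_three, spn]
  generalize d 0 = a
  generalize d 1 = b
  generalize d 2 = c
  generalize d 3 = e
  norm_num
  rcases Nat.even_or_odd a with ha | ha <;> rcases Nat.even_or_odd b with hb | hb <;>
  rcases Nat.even_or_odd c with hc | hc <;> rcases Nat.even_or_odd e with he | he <;>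
  simp only [ha.neg_pow, hb.neg_pow, hc.neg_pow, he.neg_pow] <;> ring_nf <;> positivity

/-- `F` is a polynomial with nonnegative coefficients in the rotated variables of all sites. -/
def PosCone {N : ℕ} (F : (Fin N → Quad) → ℝ) : Prop :=
  ∃ p : MvPolynomial (Fin N × Fin 4) ℝ≥0,
    ∀ ω, F ω = p.eval₂ NNReal.toRealHom (fun ic => rot ic.2 (ω ic.1))

namespace PosCone
variable {N : ℕ} {F G : (Fin N → Quad) → ℝ}

lemma add (hF : PosCone F) (hG : PosCone G) : PosCone (fun ω => F ω + G ω) := by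
  obtain ⟨p, hp⟩ := hF
  obtain ⟨q, hq⟩ := hG
  exact ⟨p + q, fun ω => by simp only [MvPolynomial.eval₂_add, hp, hq]⟩

lemma mul (hF : PosCone F) (hG : PosCone G) : PosCone (fun ω => F ω * G ω) := by
  obtain ⟨p, hp⟩ := hF
  obtain ⟨q, hq⟩ := hG
  exact ⟨p * q, fun ω => by simp only [MvPolynomial.eval₂_mul, hp, hq]⟩

lemma const {c : ℝ} (hc : 0 ≤ c) : PosCone (fun _ : Fin N → Quad => c) :=
  ⟨MvPolynomial.C c.toNNReal, fun ω => by simp [MvPolynomial.eval₂_C, hc]⟩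

lemma coord (i : Fin N) (c : Fin 4) : PosCone (fun ω : Fin N → Quad => rot c (ω i)) :=
  ⟨MvPolynomial.X (i, c), fun ω => by rw [MvPolynomial.eval₂_X]⟩

lemma sum {ι : Type*} (s : Finset ι) {F : ι → (Fin N → Quad) → ℝ} (hF : ∀ i, PosCone (F i)) :
    PosCone (fun ω => ∑ i ∈ s, F i ω) := by
  choose p hp using hF
  exact ⟨∑ i ∈ s, p i, fun ω => by simp only [MvPolynomial.eval₂_sum, hp]⟩

lemma pow (hF : PosCone F) (k : ℕ) : PosCone (fun ω => F ω ^ k) := by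
  obtain ⟨p, hp⟩ := hF
  exact ⟨p ^ k, fun ω => by simp only [MvPolynomial.eval₂_pow, hp]⟩

/-- The sum of a monomial over all configurations factorizes over the sites. -/
lemma sum_nonneg (hF : PosCone F) : 0 ≤ ∑ ω, F ω := by
  obtain ⟨p, hp⟩ := hF
  simp only [hp, MvPolynomial.eval₂_eq']
  rw [Finset.sum_comm]
  refine Finset.sum_nonneg fun d _ => ?_
  rw [← Finset.mul_sum]
  refine mul_nonneg (NNReal.coe_nonneg _) ?_
  have : ∀ ω : Fin N → Quad, ∏ ic : Fin N × Fin 4, rot ic.2 (ω ic.1) ^ d ic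
      = ∏ i, ∏ c, rot c (ω i) ^ d (i, c) := fun ω => by
    rw [Fintype.prod_prod_type]
  simp only [this]
  rw [← Fintype.piFinset_univ, ← Finset.prod_univ_sum (fun _ : Fin N => Finset.univ)
    (fun i s => ∏ c, rot c s ^ d (i, c))]
  exact Finset.prod_nonneg fun i _ => site_nonneg _

/-- Termwise application of `sum_nonneg` to the exponential series. -/
lemma sum_mul_exp_nonneg (hG : PosCone G) (hF : PosCone F) :
    0 ≤ ∑ ω, G ω * Real.exp (F ω) := by
  have key : HasSum (fun k : ℕ => ∑ ω, G ω * (F ω ^ k / (k.factorial : ℝ)))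
      (∑ ω, G ω * Real.exp (F ω)) := by
    refine hasSum_sum fun ω _ => HasSum.mul_left _ ?_
    rw [Real.exp_eq_exp_ℝ]
    exact NormedSpace.expSeries_div_hasSum_exp (F ω)
  refine key.nonneg fun k => ?_
  have := (hG.mul ((hF.pow k).mul (const (N := N) (c := ((k.factorial : ℝ))⁻¹) (by positivity))))
  simpa only [div_eq_mul_inv] using this.sum_nonneg
end PosCone

/-! ### Four copies of the system -/

section

variable {N : ℕ}

/-- The linear observable `∑ u_i σ_i`. -/
def lin (u : Fin N → ℝ) (σ : Fin N → Bool) : ℝ := ∑ i, u i * spn (σ i)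

/-- The exponent `-H(σ)` of the Gibbs weight. -/
noncomputable def energy (J : Matrix (Fin N) (Fin N) ℝ) (h : Fin N → ℝ) (σ : Fin N → Bool) : ℝ :=
  1 / 2 * (∑ i, ∑ j, J i j * spn (σ i) * spn (σ j)) + lin h σ

/-- A configuration of quadruples of spins is a quadruple of spin configurations. -/
def copies : (Fin N → Quad) ≃
    ((Fin N → Bool) × (Fin N → Bool)) × ((Fin N → Bool) × (Fin N → Bool)) :=
  (Equiv.arrowProdEquivProdArrow _ _ _).trans
    ((Equiv.arrowProdEquivProdArrow _ _ _).prodCongr (Equiv.arrowProdEquivProdArrow _ _ _))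

lemma copies_apply (ω : Fin N → Quad) : copies ω =
    ((fun i => (ω i).1.1, fun i => (ω i).1.2), (fun i => (ω i).2.1, fun i => (ω i).2.2)) := rfl

/-- The transform `rot / 2` is orthogonal, so it preserves the sum over the copies of `σ_i σ_j`; the
field couples to `rot 0` only, which is the sum of the four spins. -/
lemma posCone_energy {J : Matrix (Fin N) (Fin N) ℝ} (hJ : ∀ i j, 0 ≤ J i j) {h : Fin N → ℝ}
    (hh : ∀ i, 0 ≤ h i) : PosCone (fun ω : Fin N → Quad =>
      energy J h (copies ω).1.1 + energy J h (copies ω).1.2 +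
      energy J h (copies ω).2.1 + energy J h (copies ω).2.2) := by
  have key : PosCone (fun ω : Fin N → Quad =>
      (∑ i, ∑ j, J i j / 8 * ∑ c : Fin 4, rot c (ω i) * rot c (ω j)) + ∑ i, h i * rot 0 (ω i)) :=
    (PosCone.sum _ fun i => PosCone.sum _ fun j =>
      (PosCone.const (div_nonneg (hJ i j) (by norm_num))).mul
        (PosCone.sum _ fun c => (PosCone.coord i c).mul (PosCone.coord j c))).add
      (PosCone.sum _ fun i => (PosCone.const (hh i)).mul (PosCone.coord i 0))
  convert key using 2 with ω
  simp only [energy, lin, copies_apply, Finset.mul_sum]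
  have hsplit : ∀ A a B b C c D d : ℝ, A + a + (B + b) + (C + c) + (D + d) =
      (A + B + C + D) + (a + b + c + d) := fun _ _ _ _ _ _ _ _ => by ring
  rw [hsplit]
  simp only [← Finset.sum_add_distrib]
  refine Finset.sum_congr rfl fun i _ => congrArg₂ (fun x y : ℝ => x + y)
    (Finset.sum_congr rfl fun j _ => ?_) ?_
  · simp only [Fin.sum_univ_four, rot_zero, rot_one, rot_two, rot_three]
    ring
  · rw [rot_zero]
    ring

lemma four_copy_nonneg {J : Matrix (Fin N) (Fin N) ℝ} (hJ : ∀ i j, 0 ≤ J i j) {h : Fin N → ℝ}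
    (hh : ∀ i, 0 ≤ h i) {Φ : ((Fin N → Bool) × (Fin N → Bool)) →
      ((Fin N → Bool) × (Fin N → Bool)) → ℝ}
    (hΦ : PosCone (fun ω : Fin N → Quad => Φ (copies ω).1 (copies ω).2)) :
    0 ≤ ∑ x, ∑ y, Φ x y * ((Real.exp (energy J h x.1) * Real.exp (energy J h x.2)) *
      (Real.exp (energy J h y.1) * Real.exp (energy J h y.2))) := by
  have := hΦ.sum_mul_exp_nonneg (posCone_energy hJ hh)
  rw [← Fintype.sum_prod_type', ← copies.sum_comp]
  simpa only [Real.exp_add, mul_assoc] using this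

/-- The unnormalized Gibbs expectation `∑ f(σ) e^{-H(σ)}`. -/
noncomputable def tr (J : Matrix (Fin N) (Fin N) ℝ) (h : Fin N → ℝ) (f : (Fin N → Bool) → ℝ) : ℝ :=
  ∑ σ, f σ * Real.exp (energy J h σ)

lemma posCone_lin {u : Fin N → ℝ} (hu : ∀ i, 0 ≤ u i) (c : Fin 4) :
    PosCone (fun ω : Fin N → Quad => ∑ i, u i * rot c (ω i)) :=
  PosCone.sum _ fun i => (PosCone.const (hu i)).mul (PosCone.coord i c)

section pairs
/-! The following identities reduce four-copy sums to pair sums and those to single-copy sums. -/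

variable {α : Type*} [Fintype α] (f g W : α → ℝ)

lemma pair_sum_diff :
    ∑ x, ∑ y, (f x - f y) * (g x - g y) * (W x * W y) =
      2 * ((∑ x, f x * g x * W x) * (∑ x, W x) - (∑ x, f x * W x) * (∑ x, g x * W x)) := by
  have : 2 * ((∑ x, f x * g x * W x) * (∑ x, W x) - (∑ x, f x * W x) * (∑ x, g x * W x)) =
      (∑ x, f x * g x * W x) * (∑ x, W x) - (∑ x, f x * W x) * (∑ x, g x * W x)
      - (∑ x, g x * W x) * (∑ x, f x * W x) + (∑ x, W x) * (∑ x, f x * g x * W x) := by ring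
  rw [this]
  simp only [Finset.sum_mul_sum, ← Finset.sum_add_distrib, ← Finset.sum_sub_distrib]
  exact Finset.sum_congr rfl fun x _ => Finset.sum_congr rfl fun y _ => by ring

lemma pair_sum_one : ∑ x : α × α, (W x.1 * W x.2) = (∑ x, W x) * ∑ x, W x := by
  rw [Fintype.sum_prod_type, Finset.sum_mul_sum]

lemma pair_sum_add : ∑ x : α × α, (f x.1 + f x.2) * (W x.1 * W x.2) =
    2 * ((∑ x, f x * W x) * ∑ x, W x) := by
  have : 2 * ((∑ x, f x * W x) * ∑ x, W x) =
    (∑ x, f x * W x) * (∑ x, W x) + (∑ x, W x) * (∑ x, f x * W x) := by ring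
  rw [this, Fintype.sum_prod_type]
  simp only [Finset.sum_mul_sum, ← Finset.sum_add_distrib]
  exact Finset.sum_congr rfl fun x _ => Finset.sum_congr rfl fun y _ => by ring

lemma pair_sum_add_mul_add : ∑ x : α × α, (f x.1 + f x.2) * (g x.1 + g x.2) * (W x.1 * W x.2) =
    2 * ((∑ x, f x * g x * W x) * (∑ x, W x) + (∑ x, f x * W x) * (∑ x, g x * W x)) := by
  have : 2 * ((∑ x, f x * g x * W x) * (∑ x, W x) + (∑ x, f x * W x) * (∑ x, g x * W x)) =
      (∑ x, f x * g x * W x) * (∑ x, W x) + (∑ x, f x * W x) * (∑ x, g x * W x)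
      + (∑ x, g x * W x) * (∑ x, f x * W x) + (∑ x, W x) * (∑ x, f x * g x * W x) := by ring
  rw [this, Fintype.sum_prod_type]
  simp only [Finset.sum_mul_sum, ← Finset.sum_add_distrib]
  exact Finset.sum_congr rfl fun x _ => Finset.sum_congr rfl fun y _ => by ring

lemma pair_sum_sq : ∑ x : α × α, (g x.1 - g x.2) ^ 2 * (W x.1 * W x.2) =
    2 * ((∑ x, g x * g x * W x) * (∑ x, W x) - (∑ x, g x * W x) * (∑ x, g x * W x)) := by
  rw [Fintype.sum_prod_type, ← pair_sum_diff g g W]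
  exact Finset.sum_congr rfl fun x _ => Finset.sum_congr rfl fun y _ => by ring

lemma pair_sum_add_mul_sq : ∑ x : α × α, (f x.1 + f x.2) * (g x.1 - g x.2) ^ 2 * (W x.1 * W x.2) =
    2 * ((∑ x, f x * g x * g x * W x) * (∑ x, W x) - 2 * ((∑ x, f x * g x * W x) * (∑ x, g x * W x))
      + (∑ x, f x * W x) * (∑ x, g x * g x * W x)) := by
  have : 2 * ((∑ x, f x * g x * g x * W x) * (∑ x, W x)
      - 2 * ((∑ x, f x * g x * W x) * (∑ x, g x * W x))
      + (∑ x, f x * W x) * (∑ x, g x * g x * W x)) =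
      (∑ x, f x * g x * g x * W x) * (∑ x, W x) - (∑ x, f x * g x * W x) * (∑ x, g x * W x)
      - (∑ x, f x * g x * W x) * (∑ x, g x * W x) + (∑ x, f x * W x) * (∑ x, g x * g x * W x)
      + (∑ x, W x) * (∑ x, f x * g x * g x * W x) - (∑ x, g x * W x) * (∑ x, f x * g x * W x)
      - (∑ x, g x * W x) * (∑ x, f x * g x * W x)
      + (∑ x, g x * g x * W x) * (∑ x, f x * W x) := by ring
  rw [this, Fintype.sum_prod_type]
  simp only [Finset.sum_mul_sum, ← Finset.sum_add_distrib, ← Finset.sum_sub_distrib]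
  exact Finset.sum_congr rfl fun x _ => Finset.sum_congr rfl fun y _ => by ring
end pairs

lemma tr_one_pos (J : Matrix (Fin N) (Fin N) ℝ) (h : Fin N → ℝ) : 0 < tr J h (fun _ => 1) :=
  Finset.sum_pos (fun _ _ => by positivity) Finset.univ_nonempty

/-! ### Griffiths and Griffiths-Hurst-Sherman inequalities -/

section correlation
variable {J : Matrix (Fin N) (Fin N) ℝ} (hJ : ∀ i j, 0 ≤ J i j) {h : Fin N → ℝ}
  (hh : ∀ i, 0 ≤ h i) {u v : Fin N → ℝ} (hu : ∀ i, 0 ≤ u i) (hv : ∀ i, 0 ≤ v i)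
include hJ hh hu

/-- First Griffiths inequality for a single spin, read off from the variable `rot 0`. -/
lemma tr_lin_nonneg : 0 ≤ tr J h (lin u) := by
  have := four_copy_nonneg hJ hh
    (Φ := fun x y => (lin u x.1 + lin u x.2) + (lin u y.1 + lin u y.2)) (by
      convert posCone_lin hu 0 using 2 with ω
      simp only [lin, copies_apply, ← Finset.sum_add_distrib, rot_zero]
      exact Finset.sum_congr rfl fun i _ => by ring)
  set W : (Fin N → Bool) → ℝ := fun σ => Real.exp (energy J h σ) with hW
  rw [← Fintype.sum_prod_type', pair_sum_add (fun x : (Fin N → Bool) × (Fin N → Bool) =>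
    lin u x.1 + lin u x.2) (fun x => W x.1 * W x.2), pair_sum_one, pair_sum_add] at this
  have h1 := tr_one_pos J h
  simp only [tr, one_mul] at h1 ⊢
  by_contra! hneg
  have : (∑ σ, lin u σ * W σ) * ((∑ σ, W σ) * (∑ σ, W σ) * (∑ σ, W σ)) < 0 :=
    mul_neg_of_neg_of_pos hneg (by positivity)
  linarith

include hv

/-- Second Griffiths inequality for pairs of spins, read off from the product `rot 1 * rot 1`. -/
lemma cov_nonneg : 0 ≤ tr J h (fun σ => lin u σ * lin v σ) * tr J h (fun _ => 1)
    - tr J h (lin u) * tr J h (lin v) := by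
  have := four_copy_nonneg hJ hh
    (Φ := fun x y => ((lin u x.1 + lin u x.2) - (lin u y.1 + lin u y.2)) *
      ((lin v x.1 + lin v x.2) - (lin v y.1 + lin v y.2))) (by
      convert (posCone_lin hu 1).mul (posCone_lin hv 1) using 2 with ω
      simp only [lin, copies_apply, ← Finset.sum_add_distrib, ← Finset.sum_sub_distrib, rot_one]
      congr 1 <;> exact Finset.sum_congr rfl fun i _ => by ring)
  set W : (Fin N → Bool) → ℝ := fun σ => Real.exp (energy J h σ) with hW
  rw [pair_sum_diff (fun x : (Fin N → Bool) × (Fin N → Bool) => lin u x.1 + lin u x.2)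
    (fun x => lin v x.1 + lin v x.2) (fun x => W x.1 * W x.2), pair_sum_one, pair_sum_add,
    pair_sum_add, pair_sum_add_mul_add] at this
  have h1 := tr_one_pos J h
  simp only [tr, one_mul] at h1 ⊢
  change 0 ≤ (∑ σ, lin u σ * lin v σ * W σ) * (∑ σ, W σ)
    - (∑ σ, lin u σ * W σ) * (∑ σ, lin v σ * W σ)
  change 0 < ∑ σ, W σ at h1
  refine nonneg_of_mul_nonneg_left (b := (∑ σ, W σ) * (∑ σ, W σ)) ?_ (by positivity)
  linarith

/-- Griffiths-Hurst-Sherman inequality, read off from the product `rot 1 * rot 2 * rot 3`: the third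
joint cumulant of `lin u`, `lin v`, `lin v`, cleared of denominators, is nonpositive. Here
`rot 2 * rot 3` enters as the difference of the squares `(v₃ - v₄)² - (v₁ - v₂)²`, which separates
the two pairs of copies. -/
lemma ghs : tr J h (fun _ => 1) ^ 2 * tr J h (fun σ => lin u σ * lin v σ * lin v σ)
    - tr J h (fun _ => 1) * tr J h (lin u) * tr J h (fun σ => lin v σ * lin v σ)
    - 2 * tr J h (fun _ => 1) * tr J h (fun σ => lin u σ * lin v σ) * tr J h (lin v)
    + 2 * tr J h (lin u) * tr J h (lin v) ^ 2 ≤ 0 := by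
  have := four_copy_nonneg hJ hh
    (Φ := fun x y => ((lin u x.1 + lin u x.2) - (lin u y.1 + lin u y.2)) *
      (-(lin v x.1 - lin v x.2) ^ 2 - -(lin v y.1 - lin v y.2) ^ 2)) (by
      convert (posCone_lin hu 1).mul ((posCone_lin hv 2).mul (posCone_lin hv 3)) using 2 with ω
      have e2 : ∑ i, v i * rot 2 (ω i) =
          lin v (copies ω).1.1 - lin v (copies ω).1.2 + lin v (copies ω).2.1
            - lin v (copies ω).2.2 := by
        simp only [lin, copies_apply, ← Finset.sum_add_distrib, ← Finset.sum_sub_distrib, rot_two]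
        exact Finset.sum_congr rfl fun i _ => by ring
      have e3 : ∑ i, v i * rot 3 (ω i) =
          lin v (copies ω).1.2 - lin v (copies ω).1.1 + lin v (copies ω).2.1
            - lin v (copies ω).2.2 := by
        simp only [lin, copies_apply, ← Finset.sum_add_distrib, ← Finset.sum_sub_distrib, rot_three]
        exact Finset.sum_congr rfl fun i _ => by ring
      have e1 : ∑ i, u i * rot 1 (ω i) =
          lin u (copies ω).1.1 + lin u (copies ω).1.2 - (lin u (copies ω).2.1
            + lin u (copies ω).2.2) := by
        simp only [lin, copies_apply, ← Finset.sum_add_distrib, ← Finset.sum_sub_distrib, rot_one]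
        exact Finset.sum_congr rfl fun i _ => by ring
      rw [e1, e2, e3]
      ring)
  set W : (Fin N → Bool) → ℝ := fun σ => Real.exp (energy J h σ) with hW
  rw [pair_sum_diff (fun x : (Fin N → Bool) × (Fin N → Bool) => lin u x.1 + lin u x.2)
    (fun x => -(lin v x.1 - lin v x.2) ^ 2) (fun x => W x.1 * W x.2)] at this
  simp only [mul_neg, neg_mul, Finset.sum_neg_distrib] at this
  rw [pair_sum_one, pair_sum_add, pair_sum_sq, pair_sum_add_mul_sq] at this
  have h1 := tr_one_pos J h
  simp only [tr, one_mul] at h1 ⊢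
  change (∑ σ, W σ) ^ 2 * (∑ σ, lin u σ * lin v σ * lin v σ * W σ)
    - (∑ σ, W σ) * (∑ σ, lin u σ * W σ) * (∑ σ, lin v σ * lin v σ * W σ)
    - 2 * (∑ σ, W σ) * (∑ σ, lin u σ * lin v σ * W σ) * (∑ σ, lin v σ * W σ)
    + 2 * (∑ σ, lin u σ * W σ) * (∑ σ, lin v σ * W σ) ^ 2 ≤ 0
  change 0 < ∑ σ, W σ at h1
  refine nonpos_of_mul_nonpos_left (b := ∑ σ, W σ) ?_ h1
  linarith

end correlation

lemma tr_smul_hasDerivAt (J : Matrix (Fin N) (Fin N) ℝ) (h : Fin N → ℝ)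
    (f : (Fin N → Bool) → ℝ) (t : ℝ) :
    HasDerivAt (fun t : ℝ => tr J (t • h) f) (tr J (t • h) (fun σ => f σ * lin h σ)) t := by
  have hlin : ∀ (t : ℝ) σ, lin (t • h) σ = t * lin h σ := fun t σ => by
    simp only [lin, Pi.smul_apply, smul_eq_mul, Finset.mul_sum, mul_assoc]
  simp only [tr, energy, hlin]
  refine HasDerivAt.fun_sum fun σ _ => ?_
  have := (((hasDerivAt_id t).mul_const (lin h σ)).const_add
    (1 / 2 * ∑ i, ∑ j, J i j * spn (σ i) * spn (σ j))).exp.const_mul (f σ)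
  refine this.congr_deriv ?_
  simp only [id]
  ring

/-- The covariance of `lin u` with `lin h` is the derivative at `t = 1` of `t ↦ ⟨lin u⟩` in the field
`t • h`. This function is concave on `[0, 1]` by `ghs` and nonnegative at `0`, so its derivative at
`1` is at most its value there. -/
lemma cov_field_le {J : Matrix (Fin N) (Fin N) ℝ} (hJ : ∀ i j, 0 ≤ J i j) {h : Fin N → ℝ}
    (hh : ∀ i, 0 ≤ h i) {u : Fin N → ℝ} (hu : ∀ i, 0 ≤ u i) :
    tr J h (fun σ => lin u σ * lin h σ) * tr J h (fun _ => 1) - tr J h (lin u) * tr J h (lin h)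
      ≤ tr J h (lin u) * tr J h (fun _ => 1) := by
  set A : ((Fin N → Bool) → ℝ) → ℝ → ℝ := fun f t => tr J (t • h) f with hA
  have hd : ∀ f t, HasDerivAt (A f) (A (fun σ => f σ * lin h σ) t) t :=
    fun f t => tr_smul_hasDerivAt J h f t
  have hpos : ∀ t, 0 < A (fun _ => 1) t := fun t => tr_one_pos J _
  have hd1 : ∀ t, HasDerivAt (A fun _ => 1) (A (lin h) t) t := fun t => by
    simpa only [one_mul] using hd (fun _ => 1) t
  set f : ℝ → ℝ := fun t => A (lin u) t / A (fun _ => 1) t with hf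
  set f' : ℝ → ℝ := fun t => (A (fun σ => lin u σ * lin h σ) t * A (fun _ => 1) t
    - A (lin u) t * A (lin h) t) / A (fun _ => 1) t ^ 2 with hf'
  have hdf : ∀ t, HasDerivAt f (f' t) t := fun t => (hd (lin u) t).div (hd1 t) (hpos t).ne'
  have hdf' := fun t => ((((hd (fun σ => lin u σ * lin h σ) t).mul (hd1 t)).sub
    ((hd (lin u) t).mul (hd (lin h) t))).div ((hd1 t).pow 2) (pow_ne_zero 2 (hpos t).ne'))
  obtain ⟨c, ⟨hc0, hc1⟩, hc⟩ := exists_hasDerivAt_eq_slope f f' zero_lt_one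
    (fun t _ => (hdf t).continuousAt.continuousWithinAt) (fun t _ => hdf t)
  obtain ⟨e, ⟨hec, _⟩, he⟩ := exists_hasDerivAt_eq_slope f' _ hc1
    (fun t _ => (hdf' t).continuousAt.continuousWithinAt) (fun t _ => hdf' t)
  have he0 : 0 ≤ e := (hc0.trans hec).le
  have hf0 : 0 ≤ f 0 := div_nonneg (tr_lin_nonneg hJ (by simp) hu) (hpos 0).le
  -- the GHS inequality at the field `e • h` says that `f''(e) ≤ 0`
  have hslope : (f' 1 - f' c) / (1 - c) ≤ 0 := by
    rw [← he]
    refine div_nonpos_of_nonpos_of_nonneg ?_ (by positivity)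
    have hg := ghs hJ (h := e • h) (fun i => mul_nonneg he0 (hh i)) hu hh
    have := mul_nonpos_of_nonneg_of_nonpos (hpos e).le hg
    simp only [hA, Pi.mul_apply, Pi.sub_apply, Pi.pow_apply, pow_one, Nat.cast_ofNat,
      Nat.add_one_sub_one] at this ⊢
    linarith
  have h1 : f' 1 ≤ f' c := by
    by_contra! hlt
    exact absurd hslope (not_le.2 (div_pos (by linarith) (by linarith)))
  have h2 : f' 1 ≤ f 1 := by
    rw [hc] at h1
    linarith
  simp only [hf', hf, hA, one_smul] at h2
  have hp := tr_one_pos J h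
  rw [div_le_div_iff₀ (by positivity) hp] at h2
  refine le_of_mul_le_mul_right ?_ hp
  linarith

/-! ### Estimates for the hyperbolic tangent -/

lemma hasDerivAt_tanh' (x : ℝ) : HasDerivAt Real.tanh (1 - Real.tanh x ^ 2) x := by
  have hc := (Real.cosh_pos x).ne'
  have := (Real.hasDerivAt_sinh x).div (Real.hasDerivAt_cosh x) hc
  have e : Real.tanh = fun x => Real.sinh x / Real.cosh x :=
    funext fun x => Real.tanh_eq_sinh_div_cosh x
  rw [e]
  refine this.congr_deriv ?_
  field_simp

/-- `|2 t (1 - t²)| ≤ 1` for `t = tanh x`. Having Lipschitz constant `1` here is what gives the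
coefficient `1` in `tanh_taylor`. -/
lemma abs_tanh_sq_sub_le (a b : ℝ) : |Real.tanh b ^ 2 - Real.tanh a ^ 2| ≤ |b - a| := by
  have := convex_univ.norm_image_sub_le_of_norm_hasDerivWithin_le (C := 1)
    (fun x _ => ((hasDerivAt_tanh' x).pow 2).hasDerivWithinAt) (fun x _ => ?_)
    (Set.mem_univ a) (Set.mem_univ b)
  · simpa using this
  · have h1 := Real.tanh_sq_lt_one x
    simp only [Nat.cast_ofNat, Nat.add_one_sub_one, pow_one, Real.norm_eq_abs]
    set t := Real.tanh x
    rw [abs_le]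
    constructor <;>
      nlinarith [mul_nonneg (sq_nonneg (t - 1/2)) (by nlinarith : (0:ℝ) ≤ t + 1),
        mul_nonneg (sq_nonneg (t + 1/2)) (by nlinarith : (0:ℝ) ≤ 1 - t), sq_nonneg t]

lemma tanh_taylor (a b : ℝ) :
    |Real.tanh b - Real.tanh a - (1 - Real.tanh a ^ 2) * (b - a)| ≤ (b - a) ^ 2 := by
  have := (convex_uIcc a b).norm_image_sub_le_of_norm_hasDerivWithin_le (C := |b - a|)
    (f := fun x => Real.tanh x - (1 - Real.tanh a ^ 2) * x)
    (fun x _ => ((hasDerivAt_tanh' x).sub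
      ((hasDerivAt_id x).const_mul (1 - Real.tanh a ^ 2))).hasDerivWithinAt) (fun x hx => ?_)
    Set.left_mem_uIcc Set.right_mem_uIcc
  · rw [Real.norm_eq_abs, Real.norm_eq_abs, abs_mul_abs_self] at this
    convert this using 2 <;> ring
  · rw [Real.norm_eq_abs]
    refine le_trans ?_ ((abs_tanh_sq_sub_le x a).trans ?_)
    · apply le_of_eq
      congr 1
      ring
    · rw [abs_sub_comm a x]
      exact Set.abs_sub_left_of_mem_uIcc hx

lemma one_sub_tanh_sq_le {x : ℝ} (hx : 0 < x) : 1 - Real.tanh x ^ 2 ≤ 1 / x := by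
  have h1 := Real.cosh_pos x
  have h2 := Real.cosh_sq x
  have h3 : x ≤ Real.sinh x := Real.self_le_sinh_iff.2 hx.le
  have : 1 - Real.tanh x ^ 2 = 1 / Real.cosh x ^ 2 := by
    rw [Real.tanh_eq_sinh_div_cosh]
    field_simp
    linarith
  rw [this]
  apply one_div_le_one_div_of_le hx
  nlinarith [sq_nonneg (x - 1)]

lemma abs_tanh_sub_le {δ a b : ℝ} (hδ : 0 < δ) (ha : δ ≤ a) (hb : δ ≤ b) :
    |Real.tanh b - Real.tanh a| ≤ 1 / δ * |b - a| := by
  have := (convex_Ici δ).norm_image_sub_le_of_norm_hasDerivWithin_le (C := 1 / δ)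
    (fun x _ => (hasDerivAt_tanh' x).hasDerivWithinAt) (fun x hx => ?_)
    (Set.mem_Ici.2 ha) (Set.mem_Ici.2 hb)
  · simpa only [Real.norm_eq_abs] using this
  · have hx' : δ ≤ x := hx
    rw [Real.norm_eq_abs, abs_of_pos (by linarith [Real.tanh_sq_lt_one x])]
    exact (one_sub_tanh_sq_le (hδ.trans_le hx')).trans (one_div_le_one_div_of_le hδ hx')

/-! ### Callen's identity and the estimate at one site -/

lemma spn_sq (b : Bool) : spn b * spn b = 1 := by cases b <;> norm_num [spn]

lemma spn_le_one (b : Bool) : spn b ≤ 1 := by cases b <;> norm_num [spn]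

lemma lin_update_zero (v : Fin N → ℝ) (i : Fin N) (σ : Fin N → Bool) :
    lin (Function.update v i 0) σ = ∑ j, v j * spn (σ j) - v i * spn (σ i) := by
  have : ∀ j, Function.update v i 0 j * spn (σ j) =
      v j * spn (σ j) - if j = i then v i * spn (σ i) else 0 := fun j => by
    by_cases hj : j = i
    · subst hj; simp
    · simp [hj]
  simp [lin, this]

lemma energy_flip {J : Matrix (Fin N) (Fin N) ℝ} (hJs : ∀ i j, J i j = J j i) (h : Fin N → ℝ)
    (i : Fin N) (σ : Fin N → Bool) :
    energy J h (Function.update σ i (!σ i)) =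
      energy J h σ - 2 * spn (σ i) * (h i + lin (Function.update (J i) i 0) σ) := by
  have hs : ∀ j, spn (Function.update σ i (!σ i) j) =
      spn (σ j) - 2 * (if j = i then spn (σ i) else 0) := fun j => by
    by_cases hj : j = i
    · subst hj; cases hb : σ j <;> norm_num [spn, hb]
    · simp [hj]
  have hsq := spn_sq (σ i)
  have e1 : ∑ a, ∑ b, J a b * spn (Function.update σ i (!σ i) a) *
      spn (Function.update σ i (!σ i) b) =
      ∑ a, ∑ b, J a b * spn (σ a) * spn (σ b) - 4 * spn (σ i) * (∑ b, J i b * spn (σ b))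
        + 4 * J i i := by
    have : ∀ a b, J a b * spn (Function.update σ i (!σ i) a) *
      spn (Function.update σ i (!σ i) b) = J a b * spn (σ a) * spn (σ b)
        - 2 * (if a = i then J a b * spn (σ b) * spn (σ i) else 0)
        - 2 * (if b = i then J a b * spn (σ a) * spn (σ i) else 0)
        + 4 * (if a = i then (if b = i then J a b else 0) else 0) := fun a b => by
      rw [hs, hs]
      split_ifs
      · linear_combination (4 * J a b) * hsq
      all_goals ring
    simp only [this, Finset.sum_add_distrib, Finset.sum_sub_distrib, ← Finset.mul_sum,
      Finset.sum_ite_eq', Finset.mem_univ, if_true, ← Finset.sum_mul]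
    rw [Finset.sum_comm (f := fun a b => if a = i then J a b * spn (σ b) * spn (σ i) else 0),
      Finset.sum_comm (f := fun a b => if a = i then (if b = i then J a b else 0) else 0)]
    simp only [Finset.sum_ite_eq', Finset.mem_univ, if_true, ← Finset.sum_mul, hJs _ i]
    ring
  have e2 : lin h (Function.update σ i (!σ i)) = lin h σ - 2 * (h i * spn (σ i)) := by
    have : ∀ j, h j * spn (Function.update σ i (!σ i) j) =
      h j * spn (σ j) - 2 * (if j = i then h i * spn (σ i) else 0) := fun j => by
      rw [hs]
      split_ifs with hj
      · subst hj; ring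
      · ring
    simp [lin, this]
  rw [energy, e1, e2, lin_update_zero, energy]
  linear_combination (-2 * J i i) * hsq

/-- Callen's identity: conditionally on the other spins, `σ_i` has mean `tanh (h_i + ∑_{j ≠ i} J_ij σ_j)`.
The terms of `σ` and of `σ` with the spin at `i` flipped cancel in the difference of the two sides. -/
lemma callen {J : Matrix (Fin N) (Fin N) ℝ} (hJs : ∀ i j, J i j = J j i) (h : Fin N → ℝ)
    (i : Fin N) : tr J h (fun σ => spn (σ i)) =
      tr J h (fun σ => Real.tanh (h i + lin (Function.update (J i) i 0) σ)) := by
  set T : (Fin N → Bool) → ℝ := fun σ => Real.tanh (h i + lin (Function.update (J i) i 0) σ) with hT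
  set flip : Equiv.Perm (Fin N → Bool) := Function.Involutive.toPerm
    (fun σ => Function.update σ i (!σ i)) (fun σ => by simp) with hflip
  have hfl : ∀ σ, flip σ = Function.update σ i (!σ i) := fun σ => rfl
  have key : ∀ σ, (spn (σ i) - T σ) * Real.exp (energy J h σ) +
      (spn (flip σ i) - T (flip σ)) * Real.exp (energy J h (flip σ)) = 0 := fun σ => by
    have hT' : T (flip σ) = T σ := by
      simp only [hT, hfl, lin]
      congr 2
      refine Finset.sum_congr rfl fun j _ => ?_
      by_cases hj : j = i
      · subst hj; simp
      · simp [hj]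
    rw [hT', hfl, energy_flip hJs, Real.exp_sub]
    simp only [hT]
    set y := h i + lin (Function.update (J i) i 0) σ
    rw [Real.tanh_eq, Function.update_self]
    have hy := Real.exp_pos y
    have hE := Real.exp_pos (energy J h σ)
    cases σ i
    · simp only [spn, Bool.not_false, if_true, Bool.false_eq_true, if_false]
      have : Real.exp (2 * -1 * y) = (Real.exp y)⁻¹ * (Real.exp y)⁻¹ := by
        rw [← Real.exp_neg, ← Real.exp_add]; ring_nf
      rw [this, Real.exp_neg]
      field_simp
      ring
    · simp only [spn, Bool.not_true, if_true, Bool.false_eq_true, if_false]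
      have : Real.exp (2 * 1 * y) = Real.exp y * Real.exp y := by
        rw [← Real.exp_add]; ring_nf
      rw [this, Real.exp_neg]
      field_simp
      ring
  have hsum : ∑ σ, (spn (σ i) - T σ) * Real.exp (energy J h σ) = 0 := by
    have h1 := Equiv.sum_comp flip (fun σ => (spn (σ i) - T σ) * Real.exp (energy J h σ))
    have h2 := Finset.sum_eq_zero (s := Finset.univ) fun σ _ => key σ
    rw [Finset.sum_add_distrib, h1] at h2
    linarith
  simp only [sub_mul, Finset.sum_sub_distrib] at hsum
  exact sub_eq_zero.1 hsum

lemma tr_lin (J : Matrix (Fin N) (Fin N) ℝ) (h u : Fin N → ℝ) :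
    tr J h (lin u) = ∑ j, u j * tr J h (fun σ => spn (σ j)) := by
  simp only [tr, lin, Finset.sum_mul, Finset.mul_sum]
  rw [Finset.sum_comm]
  simp only [mul_assoc]

/-- The estimate at site `i`, with `δ`, `K`, `R` standing for `ĥ`, `‖J‖_{1,∞}`, `‖J‖_{∞,∞}`: the
fluctuations of the local field contribute `K / δ * R` and the diagonal coupling `K / δ`. -/
lemma site_bound {J : Matrix (Fin N) (Fin N) ℝ} (hJs : ∀ i j, J i j = J j i)
    (hJ : ∀ i j, 0 ≤ J i j) {h : Fin N → ℝ} {δ K R : ℝ} (hδ : 0 < δ) (hh : ∀ i, δ ≤ h i)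
    (hK : ∀ i j, J i j ≤ K) (hR : ∀ j, ∑ i, J i j ≤ R) {m : Fin N → ℝ}
    (hm : ∀ k, m k = tr J h (fun σ => spn (σ k)) / tr J h (fun _ => 1)) (i : Fin N) :
    |m i - Real.tanh (h i + ∑ j, J i j * m j)| ≤ K / δ * (1 + R) := by
  set u : Fin N → ℝ := Function.update (J i) i 0 with hu_def
  have hh0 : ∀ k, 0 ≤ h k := fun k => hδ.le.trans (hh k)
  have hZ := tr_one_pos J h
  have hK0 : 0 ≤ K := (hJ i i).trans (hK i i)
  have huJ : ∀ k, 0 ≤ u k ∧ u k ≤ J i k := fun k => by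
    by_cases hk : k = i
    · subst hk; simp [hu_def, hJ]
    · simp [hu_def, hk, hJ]
  have hu : ∀ k, 0 ≤ u k := fun k => (huJ k).1
  have hm0 : ∀ k, 0 ≤ m k := fun k => by
    have := tr_lin_nonneg hJ hh0 (u := Pi.single k 1) (fun j => by
      by_cases hj : j = k
      · subst hj; simp
      · simp [hj])
    rw [tr_lin] at this
    rw [hm]
    refine div_nonneg ?_ hZ.le
    simpa [Pi.single_apply] using this
  have hm1 : ∀ k, m k ≤ 1 := fun k => by
    rw [hm, div_le_one hZ]
    refine Finset.sum_le_sum fun σ _ => mul_le_mul_of_nonneg_right ?_ (Real.exp_pos _).le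
    exact spn_le_one (σ k)
  set M : ℝ := ∑ j, u j * m j with hM
  have hMtr : tr J h (lin u) = M * tr J h (fun _ => 1) := by
    rw [tr_lin, hM, Finset.sum_mul]
    refine Finset.sum_congr rfl fun j _ => ?_
    rw [hm]
    field_simp
  have hM0 : 0 ≤ M := Finset.sum_nonneg fun j _ => mul_nonneg (hu j) (hm0 j)
  have hMR : M ≤ R := by
    refine le_trans (Finset.sum_le_sum fun j _ => ?_) (hR i)
    calc u j * m j ≤ u j * 1 := mul_le_mul_of_nonneg_left (hm1 j) (hu j)
      _ ≤ J j i := by rw [mul_one, hJs j i]; exact (huJ j).2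
  have hJM : ∑ j, J i j * m j = M + J i i * m i := by
    have : ∀ j, u j * m j = J i j * m j - if j = i then J i i * m i else 0 := fun j => by
      by_cases hj : j = i
      · subst hj; simp [hu_def]
      · simp [hu_def, hj]
    simp [hM, this]
  -- `J i k ≤ (K / δ) * h k`, so the covariance of `lin u` with the slack variable is nonnegative
  have hvar : tr J h (fun σ => lin u σ * lin u σ) - M * M * tr J h (fun _ => 1)
      ≤ K / δ * R * tr J h (fun _ => 1) := by
    have hlin : ∀ σ, lin (fun k => K / δ * h k - u k) σ = K / δ * lin h σ - lin u σ := fun σ => by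
      simp only [lin, sub_mul, Finset.sum_sub_distrib, Finset.mul_sum, mul_assoc]
    have hcov := cov_nonneg hJ hh0 hu (v := fun k => K / δ * h k - u k) (fun k => by
      have h1 : K ≤ K / δ * h k := by
        rw [div_mul_eq_mul_div, le_div_iff₀ hδ]
        exact mul_le_mul_of_nonneg_left (hh k) hK0
      linarith [(huJ k).2, hK i k])
    have hfield := cov_field_le hJ hh0 hu
    have e1 : tr J h (fun σ => lin u σ * lin (fun k => K / δ * h k - u k) σ) =
        K / δ * tr J h (fun σ => lin u σ * lin h σ) - tr J h (fun σ => lin u σ * lin u σ) := by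
      simp only [tr, hlin, Finset.mul_sum, ← Finset.sum_sub_distrib]
      exact Finset.sum_congr rfl fun σ _ => by ring
    have e2 : tr J h (lin fun k => K / δ * h k - u k) =
        K / δ * tr J h (lin h) - tr J h (lin u) := by
      simp only [tr, hlin, Finset.mul_sum, ← Finset.sum_sub_distrib]
      exact Finset.sum_congr rfl fun σ _ => by ring
    rw [e1, e2, hMtr] at hcov
    rw [hMtr] at hfield
    have h3 := mul_le_mul_of_nonneg_left hfield (div_nonneg hK0 hδ.le)
    have h4 := mul_le_mul_of_nonneg_left hMR (div_nonneg hK0 hδ.le)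
    have h5 := mul_le_mul_of_nonneg_right h4 hZ.le
    refine le_trans ?_ h5
    refine le_of_mul_le_mul_right ?_ hZ
    linarith
  have hfluct : |m i - Real.tanh (h i + M)| ≤ K / δ * R := by
    rw [hm, callen hJs]
    set a := h i + M with ha
    have e1 : tr J h (fun σ => Real.tanh (h i + lin u σ)) / tr J h (fun _ => 1) - Real.tanh a =
        tr J h (fun σ => Real.tanh (h i + lin u σ) - Real.tanh a
          - (1 - Real.tanh a ^ 2) * (h i + lin u σ - a)) / tr J h (fun _ => 1) := by
      have : tr J h (fun σ => Real.tanh (h i + lin u σ) - Real.tanh a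
          - (1 - Real.tanh a ^ 2) * (h i + lin u σ - a)) =
          tr J h (fun σ => Real.tanh (h i + lin u σ)) - Real.tanh a * tr J h (fun _ => 1)
          - (1 - Real.tanh a ^ 2) * (tr J h (lin u) - M * tr J h (fun _ => 1)) := by
        simp only [tr, Finset.mul_sum, ← Finset.sum_sub_distrib]
        exact Finset.sum_congr rfl fun σ _ => by rw [ha]; ring
      rw [this, hMtr]
      field_simp
      ring
    have e2 : tr J h (fun σ => (h i + lin u σ - a) ^ 2) =
        tr J h (fun σ => lin u σ * lin u σ) - M * M * tr J h (fun _ => 1) := by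
      have : tr J h (fun σ => (h i + lin u σ - a) ^ 2) = tr J h (fun σ => lin u σ * lin u σ)
          - 2 * M * tr J h (lin u) + M * M * tr J h (fun _ => 1) := by
        simp only [tr, Finset.mul_sum, ← Finset.sum_sub_distrib, ← Finset.sum_add_distrib]
        exact Finset.sum_congr rfl fun σ _ => by rw [ha]; ring
      rw [this, hMtr]
      ring
    rw [e1, abs_div, abs_of_pos hZ, div_le_iff₀ hZ]
    refine le_trans ?_ hvar
    rw [← e2]
    refine (Finset.abs_sum_le_sum_abs _ _).trans (Finset.sum_le_sum fun σ _ => ?_)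
    rw [abs_mul, Real.abs_exp]
    exact mul_le_mul_of_nonneg_right (tanh_taylor _ _) (Real.exp_pos _).le
  have hdiag : |Real.tanh (h i + M) - Real.tanh (h i + (M + J i i * m i))| ≤ K / δ := by
    have hd : 0 ≤ J i i * m i := mul_nonneg (hJ i i) (hm0 i)
    refine (abs_tanh_sub_le hδ (by linarith [hh i]) (by linarith [hh i])).trans ?_
    rw [div_eq_mul_one_div K, mul_comm K]
    refine mul_le_mul_of_nonneg_left ?_ (by positivity)
    rw [abs_sub_comm, show h i + (M + J i i * m i) - (h i + M) = J i i * m i by ring,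
      abs_of_nonneg hd]
    exact (mul_le_of_le_one_right (hJ i i) (hm1 i)).trans (hK i i)
  rw [hJM]
  refine (abs_sub_le _ (Real.tanh (h i + M)) _).trans ?_
  linarith

end

/-- **Theorem 1 (Brennecke–von Soosten).**
For a ferromagnetic spin system with Hamiltonian
`H(σ) = -(1/2) ∑_{ij} J_{ij} σ_i σ_j - ∑_i h_i σ_i`, `J_{ij} ≥ 0` symmetric and `h ≥ 0`
with `ĥ = min_i h_i > 0`, the magnetizations `m_i = ⟨σ_i⟩` satisfy
`‖m - tanh(h + J m)‖_∞ ≤ (‖J‖_{1,∞}/ĥ) (3 + ‖J‖_{∞,∞} + log(1 + ‖J‖_{∞,∞}/ĥ))`. -/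
theorem mean_field_equations
    (N : ℕ) [NeZero N]
    (J : Matrix (Fin N) (Fin N) ℝ)
    (hJsym : ∀ i j, J i j = J j i)
    (hJnonneg : ∀ i j, 0 ≤ J i j)
    (h : Fin N → ℝ) (hh : ∀ i, 0 ≤ h i)
    (spin : Bool → ℝ) (hspin : spin = fun b => if b then 1 else -1)
    (H : (Fin N → Bool) → ℝ)
    (hH : ∀ σ, H σ = -(1/2) * (∑ i, ∑ j, J i j * spin (σ i) * spin (σ j))
          - ∑ i, h i * spin (σ i))
    (Z : ℝ) (hZ : Z = ∑ σ : Fin N → Bool, Real.exp (-H σ))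
    (m : Fin N → ℝ)
    (hm : ∀ k, m k = (∑ σ : Fin N → Bool, spin (σ k) * Real.exp (-H σ)) / Z)
    (hhat : ℝ) (hhat_def : hhat = ⨅ i, h i) (hhat_pos : 0 < hhat)
    (Jinfinf : ℝ) (hJinfinf : Jinfinf = ⨆ j, ∑ i, J i j)
    (Joneinf : ℝ) (hJoneinf : Joneinf = ⨆ i, ⨆ j, J i j) :
    (⨆ k, |m k - Real.tanh (h k + ∑ j, J k j * m j)|) ≤
      Joneinf / hhat * (3 + Jinfinf + Real.log (1 + Jinfinf / hhat)) := by
  subst hspin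
  have hE : ∀ σ, -H σ = energy J h σ := fun σ => by
    rw [hH]
    simp only [energy, lin, spn]
    ring
  have hZtr : Z = tr J h (fun _ => 1) := by simp only [hZ, tr, hE, one_mul]
  have hmtr : ∀ k, m k = tr J h (fun σ => spn (σ k)) / tr J h (fun _ => 1) := fun k => by
    rw [hm, hZtr]
    simp only [tr, hE, spn]
  have hhle : ∀ i, hhat ≤ h i := fun i => by
    rw [hhat_def]
    exact ciInf_le (Set.finite_range _).bddBelow i
  have hK : ∀ i j, J i j ≤ Joneinf := fun i j => by
    rw [hJoneinf]
    exact (le_ciSup (f := fun j => J i j) (Set.finite_range _).bddAbove j).trans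
      (le_ciSup (f := fun i => ⨆ j, J i j) (Set.finite_range _).bddAbove i)
  have hR : ∀ j, ∑ i, J i j ≤ Jinfinf := fun j => by
    rw [hJinfinf]
    exact le_ciSup (f := fun j => ∑ i, J i j) (Set.finite_range _).bddAbove j
  have hK0 : 0 ≤ Joneinf := (hJnonneg 0 0).trans (hK 0 0)
  have hR0 : 0 ≤ Jinfinf := (Finset.sum_nonneg fun i _ => hJnonneg i 0).trans (hR 0)
  have hlog : 0 ≤ Real.log (1 + Jinfinf / hhat) :=
    Real.log_nonneg (by linarith [div_nonneg hR0 hhat_pos.le])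
  refine ciSup_le fun k => (site_bound hJsym hJnonneg hhat_pos hhle hK hR hmtr k).trans ?_
  exact mul_le_mul_of_nonneg_left (by linarith) (div_nonneg hK0 hhat_pos.le)
end

section
/- For every index k and every s ∈ ℝ^N with s ≥ 0 entrywise, and every h ∈ ℝ^N with h_i > 0 for all i, the directional derivative of the magnetization in the direction s satisfies |Σ_{j=1}^N s_j · ∂m_k/∂h_j (h)| ≤ (‖s‖_∞ / ĥ) · m_k(h). -/
/-!
Since `∂m_k/∂h_j` is the truncated correlation `⟨σ_k σ_j⟩ - ⟨σ_k⟩⟨σ_j⟩`, which is nonnegative by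
Griffiths' second inequality, and `s_j ≤ (‖s‖_∞ / ĥ) h_j`, it suffices to bound the derivative in
the direction `h` itself: `∑ j, h_j ∂m_k/∂h_j ≤ m_k(h)` (`trunc_le_mag`). This holds because
`t ↦ m_k(t h)` is concave on `[0, ∞)` by the GHS inequality and is nonnegative at `t = 0`.

The correlation inequalities are proved by the method of Ellis and Monroe. Take four independent
replicas of the spins and rotate them at each site to `α, β, γ, δ` (`rot`). The replicated
Hamiltonian stays ferromagnetic in the rotated variables (`prod_wt`), and for the uniform measure on
`{-1, 1}⁴` every monomial in `α, β, γ, δ` has nonnegative mean (`single_site`). Expanding the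
exponential shows that monomials have nonnegative Gibbs expectation. The expectations of `α_k`,
`β_k β_j` and `β_k γ_i δ_j` are then, up to explicit constants, the first, second and (with a
negative constant) third joint cumulants of the spins: `griffiths_first`, `griffiths_second`, `ghs`.
-/

/-- Partial derivative of a function of `h ∈ ℝ^N` in the coordinate direction `j`. -/
noncomputable def pderiv' {N : ℕ} (F : (Fin N → ℝ) → ℝ) (j : Fin N) (h : Fin N → ℝ) : ℝ :=
  fderiv ℝ F h (Pi.single j 1)

namespace GHS

/-! ### Rotated replica variables -/

/-- The spin value `±1` encoded by a Boolean. -/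
noncomputable def sp (b : Bool) : ℝ := if b then 1 else -1

/-- The Ellis–Monroe variables `α, β, γ, δ` (for `q = 0, 1, 2, 3`) of a quadruple `y`, without the
normalising factor `1 / 2`. The signs are such that `α β γ δ ≥ 0` when all `y a` are `±1`. -/
noncomputable def rot (q : Fin 4) (y : Fin 4 → ℝ) : ℝ :=
  ![y 0 + y 1 + y 2 + y 3, y 0 + y 1 - y 2 - y 3, y 0 - y 1 + y 2 - y 3,
    -y 0 + y 1 + y 2 - y 3] q

variable {N : ℕ}

/-- The rotated variable of type `q` at the site `i` for the replicated configuration `τ`. -/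
noncomputable def coord (q : Fin 4) (i : Fin N) (τ : Fin 4 → Fin N → Bool) : ℝ :=
  rot q (fun a => sp (τ a i))

/-- The monomial in the rotated variables with exponent `e i q` at the site `i` and type `q`. -/
noncomputable def mon (e : Fin N → Fin 4 → ℕ) (τ : Fin 4 → Fin N → Bool) : ℝ :=
  ∏ i, ∏ q, coord q i τ ^ e i q

/-! ### The cone of functions with nonnegative moments -/

/-- Functions of the replicated spins having nonnegative sum against every monomial. -/
def Good (G : (Fin 4 → Fin N → Bool) → ℝ) : Prop :=
  ∀ e, 0 ≤ ∑ τ, mon e τ * G τ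

/-- Multipliers of the cone of `Good` functions. Unlike `Good`, this class is visibly closed under
products, so that products and exponentials of ferromagnetic expressions can be built up freely. -/
def Mult (F : (Fin 4 → Fin N → Bool) → ℝ) : Prop :=
  ∀ G, Good G → Good (fun τ => F τ * G τ)

lemma sum_four (f : (Fin 4 → Bool) → ℝ) :
    ∑ v, f v = ∑ a, ∑ b, ∑ c, ∑ d, f ![a, b, c, d] := by
  have h : ∀ (n : ℕ) (f : (Fin (n+1) → Bool) → ℝ),
      ∑ v, f v = ∑ a, ∑ v, f (Matrix.vecCons a v) := by
    intro n f
    rw [← (Fin.consEquiv (fun _ => Bool)).sum_comp, Fintype.sum_prod_type]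
    rfl
  have h0 : ∀ f : (Fin 0 → Bool) → ℝ, ∑ v, f v = f ![] := fun f =>
    Fintype.sum_eq_single ![] fun v hv => absurd (Subsingleton.elim _ _) hv
  simp only [h, h0]

/-- Every monomial in `α, β, γ, δ` has nonnegative mean at a single site: it vanishes by symmetry
unless the four exponents have the same parity, and then every term is nonnegative because
`α β γ δ ≥ 0`. -/
lemma single_site (e : Fin 4 → ℕ) :
    0 ≤ ∑ v : Fin 4 → Bool, ∏ q, rot q (fun a => sp (v a)) ^ e q := by
  rw [sum_four]
  simp only [Fin.prod_univ_four, Fintype.sum_bool, rot, sp]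
  generalize e 0 = a
  generalize e 1 = b
  generalize e 2 = c
  generalize e 3 = d
  simp
  norm_num
  -- Pull the signs out of the powers, so that the parity of each exponent decides cancellation.
  have h4 : (-4 : ℝ) = (-1) * 4 := by norm_num
  have h2 : (-2 : ℝ) = (-1) * 2 := by norm_num
  rw [h4, h2]
  simp only [mul_pow]
  rcases Nat.even_or_odd a with ha | ha <;> rcases Nat.even_or_odd b with hb | hb <;>
  rcases Nat.even_or_odd c with hc | hc <;> rcases Nat.even_or_odd d with hd | hd <;>
  simp only [ha.neg_one_pow, hb.neg_one_pow, hc.neg_one_pow, hd.neg_one_pow] <;>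
  ring_nf <;> positivity

/-- The sum of a monomial over all configurations factorises over the sites. -/
lemma good_one : Good (fun _ : Fin 4 → Fin N → Bool => (1 : ℝ)) := by
  intro e
  have : ∑ τ : Fin 4 → Fin N → Bool, mon e τ * 1 =
      ∏ i, ∑ v : Fin 4 → Bool, ∏ q, rot q (fun a => sp (v a)) ^ e i q := by
    rw [Fintype.prod_sum, ← (Equiv.piComm (fun (_ : Fin 4) (_ : Fin N) => Bool)).sum_comp]
    simp [mon, coord]
  rw [this]
  exact Finset.prod_nonneg fun i _ => single_site _

lemma mult_const {c : ℝ} (hc : 0 ≤ c) : Mult (fun _ : Fin 4 → Fin N → Bool => c) := by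
  intro G hG e
  have := mul_nonneg hc (hG e)
  rw [Finset.mul_sum] at this
  exact this.trans_eq (Finset.sum_congr rfl fun τ _ => mul_left_comm _ _ _)

lemma mult_coord (q : Fin 4) (i : Fin N) : Mult (coord q i) := by
  intro G hG e
  have := hG (fun j r => e j r + if j = i ∧ r = q then 1 else 0)
  convert this using 2 with τ
  have : mon (fun j r => e j r + if j = i ∧ r = q then 1 else 0) τ = mon e τ * coord q i τ := by
    simp only [mon, pow_add, Finset.prod_mul_distrib]
    congr 1
    rw [Finset.prod_eq_single i, Finset.prod_eq_single q] <;> simp +contextual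
  rw [this]; ring

lemma Mult.add {F F' : (Fin 4 → Fin N → Bool) → ℝ} (h : Mult F) (h' : Mult F') :
    Mult (fun τ => F τ + F' τ) := by
  intro G hG e
  have := add_nonneg (h G hG e) (h' G hG e)
  rw [← Finset.sum_add_distrib] at this
  exact this.trans_eq (Finset.sum_congr rfl fun τ _ => by ring)

lemma Mult.mul {F F' : (Fin 4 → Fin N → Bool) → ℝ} (h : Mult F) (h' : Mult F') :
    Mult (fun τ => F τ * F' τ) := by
  intro G hG
  simp only [mul_assoc]
  exact h _ (h' G hG)

lemma Mult.sum {ι : Type*} (s : Finset ι) {F : ι → (Fin 4 → Fin N → Bool) → ℝ}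
    (h : ∀ i, Mult (F i)) : Mult (fun τ => ∑ i ∈ s, F i τ) := by
  classical
  induction s using Finset.induction_on with
  | empty => simpa using mult_const le_rfl
  | insert a s ha ih => simpa only [Finset.sum_insert ha] using (h a).add ih

lemma Mult.pow {F : (Fin 4 → Fin N → Bool) → ℝ} (h : Mult F) (n : ℕ) :
    Mult (fun τ => F τ ^ n) := by
  induction n with
  | zero => simpa using mult_const zero_le_one
  | succ n ih => simpa only [pow_succ] using ih.mul h

/-- Multipliers are stable under exponentiation, by the power series. -/
lemma Mult.exp {F : (Fin 4 → Fin N → Bool) → ℝ} (h : Mult F) :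
    Mult (fun τ => Real.exp (F τ)) := by
  intro G hG e
  have hs : HasSum (fun n : ℕ => ∑ τ, mon e τ * ((F τ ^ n / n.factorial) * G τ))
      (∑ τ, mon e τ * (Real.exp (F τ) * G τ)) := by
    refine hasSum_sum fun τ _ => ?_
    refine HasSum.mul_left _ (HasSum.mul_right _ ?_)
    rw [Real.exp_eq_exp_ℝ]
    exact NormedSpace.expSeries_div_hasSum_exp (F τ)
  refine hs.nonneg fun n => ?_
  have := ((h.pow n).mul (mult_const (inv_nonneg.2 (Nat.cast_nonneg n.factorial)))) G hG e
  simpa only [div_eq_mul_inv] using this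

lemma Mult.sum_nonneg {F : (Fin 4 → Fin N → Bool) → ℝ} (h : Mult F) : 0 ≤ ∑ τ, F τ := by
  simpa [mon] using h _ good_one 0

/-! ### The replicated Gibbs weight -/

/-- The interaction part of `-H`. -/
noncomputable def inter (J : Matrix (Fin N) (Fin N) ℝ) (σ : Fin N → Bool) : ℝ :=
  1 / 2 * ∑ i, ∑ j, J i j * sp (σ i) * sp (σ j)

/-- The external-field part of `-H`; also the linear form in the spins with coefficients `h`. -/
noncomputable def field (h : Fin N → ℝ) (σ : Fin N → Bool) : ℝ := ∑ i, h i * sp (σ i)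

/-- The Boltzmann weight `exp (-H)`. -/
noncomputable def wt (J : Matrix (Fin N) (Fin N) ℝ) (h : Fin N → ℝ) (σ : Fin N → Bool) : ℝ :=
  Real.exp (inter J σ + field h σ)

/-- The unnormalised expectation of `A`; in particular `mom J h (fun _ => 1)` is the partition
function. -/
noncomputable def mom (J : Matrix (Fin N) (Fin N) ℝ) (h : Fin N → ℝ)
    (A : (Fin N → Bool) → ℝ) : ℝ := ∑ σ, A σ * wt J h σ

/-- `rot` is twice an orthogonal transformation. -/
lemma rot_inner (y z : Fin 4 → ℝ) : ∑ a, y a * z a = 1 / 4 * ∑ q, rot q y * rot q z := by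
  simp [Fin.sum_univ_four, rot]; ring

/-- The replicated weight is the exponential of a polynomial with nonnegative coefficients in the
rotated variables, when the couplings and the field are nonnegative. -/
lemma prod_wt (J : Matrix (Fin N) (Fin N) ℝ) (h : Fin N → ℝ) (τ : Fin 4 → Fin N → Bool) :
    ∏ a, wt J h (τ a) = Real.exp
      ((∑ i, ∑ j, ∑ q, J i j / 8 * (coord q i τ * coord q j τ)) + ∑ i, h i * coord 0 i τ) := by
  simp only [wt, ← Real.exp_sum, Finset.sum_add_distrib]
  congr 2
  · simp only [inter, ← Finset.mul_sum]
    rw [Finset.sum_comm, Finset.mul_sum]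
    refine Finset.sum_congr rfl fun i _ => ?_
    rw [Finset.sum_comm, Finset.mul_sum]
    refine Finset.sum_congr rfl fun j _ => ?_
    simp only [mul_assoc, ← Finset.mul_sum]
    rw [rot_inner (fun a => sp (τ a i)) (fun a => sp (τ a j))]
    simp only [coord]; ring
  · simp only [field]
    rw [Finset.sum_comm]
    refine Finset.sum_congr rfl fun i _ => ?_
    rw [← Finset.mul_sum]
    simp [coord, rot, Fin.sum_univ_four]

lemma mult_wt {J : Matrix (Fin N) (Fin N) ℝ} {h : Fin N → ℝ} (hJ : ∀ i j, 0 ≤ J i j)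
    (hh : ∀ i, 0 ≤ h i) : Mult (fun τ => ∏ a, wt J h (τ a)) := by
  simp only [prod_wt]
  refine Mult.exp (Mult.add ?_ ?_)
  · exact Mult.sum _ fun i => Mult.sum _ fun j => Mult.sum _ fun q =>
      (mult_const (div_nonneg (hJ i j) (by norm_num))).mul ((mult_coord q i).mul (mult_coord q j))
  · exact Mult.sum _ fun i => (mult_const (hh i)).mul (mult_coord 0 i)

lemma mult_field {c : Fin N → ℝ} (hc : ∀ i, 0 ≤ c i) (q : Fin 4) :
    Mult (fun τ : Fin 4 → Fin N → Bool => rot q (fun a => field c (τ a))) := by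
  have : (fun τ : Fin 4 → Fin N → Bool => rot q (fun a => field c (τ a))) =
      fun τ => ∑ i, c i * coord q i τ := by
    ext τ
    fin_cases q <;> simp [rot, coord, field, mul_add, mul_sub, Finset.sum_add_distrib]
  rw [this]
  exact Mult.sum _ fun i => (mult_const (hc i)).mul (mult_coord q i)

/-! ### Replica expectations as joint cumulants -/

lemma sum_prod_replica (g : Fin 4 → (Fin N → Bool) → ℝ) :
    ∑ τ : Fin 4 → Fin N → Bool, ∏ a, g a (τ a) = ∏ a, ∑ σ, g a σ :=
  (Fintype.prod_sum _).symm

/-- Expectation of a product of three observables of given replicas, by independence. -/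
lemma triple (J : Matrix (Fin N) (Fin N) ℝ) (h : Fin N → ℝ) (A B D : (Fin N → Bool) → ℝ)
    (a b d : Fin 4) :
    ∑ τ : Fin 4 → Fin N → Bool, A (τ a) * B (τ b) * D (τ d) * ∏ r, wt J h (τ r) =
      ∏ r, mom J h (fun σ => (if r = a then A σ else 1) * (if r = b then B σ else 1) *
        (if r = d then D σ else 1)) := by
  simp only [mom]
  rw [← sum_prod_replica]
  simp only [Finset.prod_mul_distrib, Finset.prod_ite_eq', Finset.mem_univ, if_true]

lemma triple_rot (J : Matrix (Fin N) (Fin N) ℝ) (h : Fin N → ℝ) (A B D : (Fin N → Bool) → ℝ)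
    (x y z : Fin 4 → ℝ) :
    ∑ τ : Fin 4 → Fin N → Bool, (∑ a, x a * A (τ a)) * (∑ b, y b * B (τ b)) *
        (∑ d, z d * D (τ d)) * ∏ r, wt J h (τ r) =
      ∑ d, ∑ b, ∑ a, x a * y b * z d *
      ∏ r, mom J h (fun σ => (if r = a then A σ else 1) * (if r = b then B σ else 1) *
        (if r = d then D σ else 1)) := by
  simp only [← triple, Finset.mul_sum]
  simp only [Finset.sum_mul]
  rw [Finset.sum_comm]
  refine Finset.sum_congr rfl fun d _ => ?_
  rw [Finset.sum_comm]
  refine Finset.sum_congr rfl fun b _ => ?_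
  rw [Finset.sum_comm]
  refine Finset.sum_congr rfl fun a _ => ?_
  refine Finset.sum_congr rfl fun τ _ => ?_
  ring

/-- The rotated variables as explicit linear combinations over the replicas. -/
lemma rot_eq (F : (Fin N → Bool) → ℝ) (τ : Fin 4 → Fin N → Bool) :
    rot 0 (fun a => F (τ a)) = ∑ a, (![1, 1, 1, 1] : Fin 4 → ℝ) a * F (τ a) ∧
    rot 1 (fun a => F (τ a)) = ∑ a, (![1, 1, -1, -1] : Fin 4 → ℝ) a * F (τ a) ∧
    rot 2 (fun a => F (τ a)) = ∑ a, (![1, -1, 1, -1] : Fin 4 → ℝ) a * F (τ a) ∧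
    rot 3 (fun a => F (τ a)) = ∑ a, (![-1, 1, 1, -1] : Fin 4 → ℝ) a * F (τ a) := by
  simp [rot, Fin.sum_univ_four]
  ring_nf
  simp

/-- The replica expectation of `β(A) γ(B) δ(D)` is a negative multiple of the third
joint cumulant. -/
lemma sum_third (J : Matrix (Fin N) (Fin N) ℝ) (h : Fin N → ℝ) (A B D : (Fin N → Bool) → ℝ) :
    ∑ τ : Fin 4 → Fin N → Bool, rot 1 (fun a => A (τ a)) * rot 2 (fun a => B (τ a)) *
        rot 3 (fun a => D (τ a)) * ∏ r, wt J h (τ r) =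
      -4 * mom J h (fun _ => 1) * (mom J h (fun σ => A σ * B σ * D σ) * mom J h (fun _ => 1) ^ 2
        - mom J h (fun _ => 1) * (mom J h (fun σ => A σ * B σ) * mom J h D
          + mom J h (fun σ => A σ * D σ) * mom J h B + mom J h (fun σ => B σ * D σ) * mom J h A)
        + 2 * mom J h A * mom J h B * mom J h D) := by
  have key := triple_rot J h A B D ![1, 1, -1, -1] ![1, -1, 1, -1] ![-1, 1, 1, -1]
  simp only [← (rot_eq _ _).2.1, ← (rot_eq _ _).2.2.1, ← (rot_eq _ _).2.2.2] at key
  rw [key]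
  simp [Fin.sum_univ_four, Fin.prod_univ_four]
  ring

/-- The replica expectation of `β(A) β(B)` is a positive multiple of the covariance. -/
lemma sum_second (J : Matrix (Fin N) (Fin N) ℝ) (h : Fin N → ℝ) (A B : (Fin N → Bool) → ℝ) :
    ∑ τ : Fin 4 → Fin N → Bool, rot 1 (fun a => A (τ a)) * rot 1 (fun a => B (τ a)) *
        ∏ r, wt J h (τ r) =
      4 * mom J h (fun _ => 1) ^ 2 *
        (mom J h (fun σ => A σ * B σ) * mom J h (fun _ => 1) - mom J h A * mom J h B) := by
  -- A vacuous third observable, so that the formula for triples applies.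
  have key := triple_rot J h A B (fun _ => 1) ![1, 1, -1, -1] ![1, 1, -1, -1] ![1, 0, 0, 0]
  simp only [← (rot_eq _ _).2.1] at key
  simp [Fin.sum_univ_four, Fin.prod_univ_four] at key
  simp only [Fin.prod_univ_four]
  rw [key]
  ring

lemma sum_first (J : Matrix (Fin N) (Fin N) ℝ) (h : Fin N → ℝ) (A : (Fin N → Bool) → ℝ) :
    ∑ τ : Fin 4 → Fin N → Bool, rot 0 (fun a => A (τ a)) * ∏ r, wt J h (τ r) =
      4 * mom J h (fun _ => 1) ^ 3 * mom J h A := by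
  have key := triple_rot J h A (fun _ => 1) (fun _ => 1) ![1, 1, 1, 1] ![1, 0, 0, 0] ![1, 0, 0, 0]
  simp only [← (rot_eq _ _).1] at key
  simp [Fin.sum_univ_four, Fin.prod_univ_four] at key
  simp only [Fin.prod_univ_four]
  rw [key]
  ring

/-! ### The Griffiths and GHS inequalities -/

lemma mom_one_pos (J : Matrix (Fin N) (Fin N) ℝ) (h : Fin N → ℝ) :
    0 < mom J h (fun _ => 1) := by
  simp only [mom, one_mul]
  exact Finset.sum_pos (fun σ _ => Real.exp_pos _) Finset.univ_nonempty

section correlation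
variable {J : Matrix (Fin N) (Fin N) ℝ} {h : Fin N → ℝ}

/-- Griffiths' first inequality for a single spin, multiplied by the partition function. -/
lemma griffiths_first (hJ : ∀ i j, 0 ≤ J i j) (hh : ∀ i, 0 ≤ h i) (k : Fin N) :
    0 ≤ mom J h (fun σ => sp (σ k)) := by
  have key := ((mult_coord 0 k).mul (mult_wt hJ hh)).sum_nonneg
  unfold coord at key
  rw [sum_first J h (fun σ => sp (σ k))] at key
  have := mom_one_pos J h
  exact nonneg_of_mul_nonneg_right key (by positivity)

/-- Griffiths' second inequality for two spins, multiplied by the squared partition function. -/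
lemma griffiths_second (hJ : ∀ i j, 0 ≤ J i j) (hh : ∀ i, 0 ≤ h i) (k j : Fin N) :
    0 ≤ mom J h (fun σ => sp (σ k) * sp (σ j)) * mom J h (fun _ => 1) -
      mom J h (fun σ => sp (σ k)) * mom J h (fun σ => sp (σ j)) := by
  have key := (((mult_coord 1 k).mul (mult_coord 1 j)).mul (mult_wt hJ hh)).sum_nonneg
  unfold coord at key
  rw [sum_second J h (fun σ => sp (σ k)) (fun σ => sp (σ j))] at key
  have := mom_one_pos J h
  exact nonneg_of_mul_nonneg_right key (by positivity)

/-- The Griffiths–Hurst–Sherman inequality in the direction `v`, multiplied by the cube of the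
partition function. -/
lemma ghs (hJ : ∀ i j, 0 ≤ J i j) (hh : ∀ i, 0 ≤ h i) {v : Fin N → ℝ} (hv : ∀ i, 0 ≤ v i)
    (k : Fin N) :
    mom J h (fun σ => sp (σ k) * field v σ * field v σ) * mom J h (fun _ => 1) ^ 2
        - mom J h (fun _ => 1) * (2 * mom J h (fun σ => sp (σ k) * field v σ) * mom J h (field v)
          + mom J h (fun σ => field v σ * field v σ) * mom J h (fun σ => sp (σ k)))
        + 2 * mom J h (fun σ => sp (σ k)) * mom J h (field v) ^ 2 ≤ 0 := by
  have key := ((((mult_coord 1 k).mul (mult_field hv 2)).mul (mult_field hv 3)).mul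
    (mult_wt hJ hh)).sum_nonneg
  unfold coord at key
  rw [sum_third J h (fun σ => sp (σ k)) (field v) (field v)] at key
  have := mom_one_pos J h
  by_contra! hc
  have := mul_pos this hc
  linarith

end correlation

/-! ### Derivatives of the magnetization -/

lemma hasDerivAt_mom (J : Matrix (Fin N) (Fin N) ℝ) (g v : Fin N → ℝ)
    (A : (Fin N → Bool) → ℝ) (t : ℝ) :
    HasDerivAt (fun t : ℝ => mom J (g + t • v) A)
      (mom J (g + t • v) (fun σ => A σ * field v σ)) t := by
  have hf : ∀ (t : ℝ) σ, field (g + t • v) σ = field g σ + t * field v σ := by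
    intro t σ
    simp only [field, Finset.mul_sum, ← Finset.sum_add_distrib]
    refine Finset.sum_congr rfl fun i _ => ?_
    simp only [Pi.add_apply, Pi.smul_apply, smul_eq_mul]; ring
  simp only [mom, wt, hf]
  refine HasDerivAt.fun_sum fun σ _ => ?_
  have h1 : HasDerivAt (fun t : ℝ => inter J σ + (field g σ + t * field v σ)) (field v σ) t := by
    simpa using ((((hasDerivAt_id t).mul_const (field v σ)).const_add (field g σ)).const_add
      (inter J σ))
  exact (h1.exp.const_mul (A σ)).congr_deriv (by ring)

/-- The Gibbs expectation of `A`. -/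
noncomputable def mag (J : Matrix (Fin N) (Fin N) ℝ) (h : Fin N → ℝ)
    (A : (Fin N → Bool) → ℝ) : ℝ := mom J h A / mom J h (fun _ => 1)

/-- The truncated correlation (covariance) of `A` and `B` in the Gibbs measure. -/
noncomputable def trunc (J : Matrix (Fin N) (Fin N) ℝ) (h : Fin N → ℝ)
    (A B : (Fin N → Bool) → ℝ) : ℝ :=
  (mom J h (fun σ => A σ * B σ) * mom J h (fun _ => 1) - mom J h A * mom J h B) /
    mom J h (fun _ => 1) ^ 2

lemma hasDerivAt_mag (J : Matrix (Fin N) (Fin N) ℝ) (g v : Fin N → ℝ)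
    (A : (Fin N → Bool) → ℝ) (t : ℝ) :
    HasDerivAt (fun t : ℝ => mag J (g + t • v) A) (trunc J (g + t • v) A (field v)) t := by
  have := (hasDerivAt_mom J g v A t).div (hasDerivAt_mom J g v (fun _ => 1) t)
    (mom_one_pos J _).ne'
  simp only [one_mul] at this
  exact this

lemma differentiable_mag (J : Matrix (Fin N) (Fin N) ℝ) (A : (Fin N → Bool) → ℝ) :
    Differentiable ℝ (fun g => mag J g A) := by
  have hm : ∀ A, Differentiable ℝ (fun g => mom J g A) := by
    intro A
    unfold mom wt field
    fun_prop
  intro g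
  simp only [mag, div_eq_mul_inv]
  exact (hm A g).fun_mul ((hm (fun _ => 1) g).fun_inv (mom_one_pos J g).ne')

lemma fderiv_mag (J : Matrix (Fin N) (Fin N) ℝ) (g v : Fin N → ℝ) (A : (Fin N → Bool) → ℝ) :
    fderiv ℝ (fun g => mag J g A) g v = trunc J g A (field v) := by
  rw [← (differentiable_mag J A g).lineDeriv_eq_fderiv]
  have := (hasDerivAt_mag J g v A 0).deriv
  simpa [lineDeriv] using this

/-! ### Concavity along rays -/

/-- The derivative of `t ↦ m_k(t h)` at `t = 1` is at most its value there. -/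
lemma trunc_le_mag {J : Matrix (Fin N) (Fin N) ℝ} {h : Fin N → ℝ} (hJ : ∀ i j, 0 ≤ J i j)
    (hh : ∀ i, 0 ≤ h i) (k : Fin N) :
    trunc J h (fun σ => sp (σ k)) (field h) ≤ mag J h (fun σ => sp (σ k)) := by
  set A : (Fin N → Bool) → ℝ := fun σ => sp (σ k) with hA
  have hd : ∀ t : ℝ, ∃ d, (0 ≤ t → d ≤ 0) ∧
      HasDerivAt (fun t : ℝ => trunc J (0 + t • h) A (field h)) d t := by
    intro t
    have hZ := mom_one_pos J (0 + t • h)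
    refine ⟨_, fun ht => ?_, (((hasDerivAt_mom J 0 h _ t).mul (hasDerivAt_mom J 0 h _ t)).sub
      ((hasDerivAt_mom J 0 h _ t).mul (hasDerivAt_mom J 0 h _ t))).div
      ((hasDerivAt_mom J 0 h _ t).pow 2) (pow_ne_zero _ hZ.ne')⟩
    have key := ghs (h := 0 + t • h) hJ
      (fun i => by simpa using mul_nonneg ht (hh i)) hh k
    simp only [one_mul, Pi.mul_apply, Pi.sub_apply]
    refine div_nonpos_of_nonpos_of_nonneg ?_ (by positivity)
    have := mul_nonpos_of_nonneg_of_nonpos hZ.le key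
    simp only [hA]
    refine le_of_eq_of_le ?_ this
    push_cast
    ring
  -- With `f t = m_k(t h)`, the function `f t - t f' t` has derivative `-t f'' t ≥ 0`.
  have hφ : ∀ t : ℝ, ∃ d, (0 ≤ t → 0 ≤ d) ∧ HasDerivAt (fun t : ℝ => mag J (0 + t • h) A -
      t * trunc J (0 + t • h) A (field h)) d t := by
    intro t
    obtain ⟨d, hd0, hd1⟩ := hd t
    refine ⟨-(t * d), fun ht => by nlinarith [hd0 ht], ?_⟩
    exact ((hasDerivAt_mag J 0 h A t).fun_sub ((hasDerivAt_id' t).fun_mul hd1)).congr_deriv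
      (by ring)
  choose d hd0 hd1 using hφ
  have hmono := monotoneOn_of_hasDerivWithinAt_nonneg (convex_Ici (0 : ℝ))
    (fun t _ => (hd1 t).continuousAt.continuousWithinAt)
    (fun t _ => (hd1 t).hasDerivWithinAt)
    (fun t ht => hd0 t (interior_subset ht))
  have h01 := hmono (Set.mem_Ici.2 le_rfl) (Set.mem_Ici.2 zero_le_one) zero_le_one
  have h0 : 0 ≤ mag J 0 A :=
    div_nonneg (griffiths_first hJ (fun _ => le_rfl) k) (mom_one_pos J 0).le
  simp only [zero_smul, add_zero, zero_mul, sub_zero, one_smul, zero_add, one_mul] at h01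
  linarith

end GHS

/-! ### The bound in a general direction -/

/-- **Lemma 2.1, first bound.** For every `k`, every `s ≥ 0` and every `h > 0` entrywise,
`|∑_j s_j ∂m_k/∂h_j (h)| ≤ (‖s‖_∞/ĥ) m_k(h)`. -/
theorem directional_derivative_magnetization_bound
    (N : ℕ) [NeZero N]
    (J : Matrix (Fin N) (Fin N) ℝ)
    (hJsym : ∀ i j, J i j = J j i)
    (hJnonneg : ∀ i j, 0 ≤ J i j)
    (spin : Bool → ℝ) (hspin : spin = fun b => if b then 1 else -1)
    (H : (Fin N → ℝ) → (Fin N → Bool) → ℝ)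
    (hH : ∀ g σ, H g σ = -(1/2) * (∑ i, ∑ j, J i j * spin (σ i) * spin (σ j))
          - ∑ i, g i * spin (σ i))
    (m : (Fin N → ℝ) → Fin N → ℝ)
    (hm : ∀ g k, m g k =
      (∑ σ : Fin N → Bool, spin (σ k) * Real.exp (-H g σ)) /
      (∑ σ : Fin N → Bool, Real.exp (-H g σ)))
    (k : Fin N) (s : Fin N → ℝ) (hs : ∀ i, 0 ≤ s i)
    (h : Fin N → ℝ) (hh : ∀ i, 0 < h i) :
    |∑ j, s j * pderiv' (fun g => m g k) j h| ≤
      ((⨆ i, |s i|) / (⨅ i, h i)) * m h k := by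
  subst hspin
  have hw : ∀ g σ, Real.exp (-H g σ) = GHS.wt J g σ := by
    intro g σ
    rw [hH]
    simp only [GHS.wt, GHS.inter, GHS.field, GHS.sp]
    congr 1
    ring
  have hmag : ∀ g i, m g i = GHS.mag J g (fun σ => GHS.sp (σ i)) := by
    intro g i
    rw [hm]
    simp only [hw, GHS.mag, GHS.mom, GHS.sp, one_mul]
  have hh0 : ∀ i, 0 ≤ h i := fun i => (hh i).le
  have hfield : ∀ j, GHS.field (Pi.single j 1 : Fin N → ℝ) = fun σ => GHS.sp (σ j) := by
    intro j
    ext σ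
    simp [GHS.field, Pi.single_apply]
  have hp : ∀ j, 0 ≤ pderiv' (fun g => m g k) j h := by
    intro j
    simp only [pderiv', hmag, GHS.fderiv_mag, hfield]
    exact div_nonneg (GHS.griffiths_second hJnonneg hh0 k j) (sq_nonneg _)
  have hsum : ∑ j, h j * pderiv' (fun g => m g k) j h ≤ m h k := by
    have := GHS.trunc_le_mag hJnonneg hh0 k
    rw [← GHS.fderiv_mag, ← hmag] at this
    simp only [← hmag] at this
    refine le_of_eq_of_le ?_ this
    have e := congrArg (fderiv ℝ (fun g => m g k) h) (pi_eq_sum_univ' h)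
    rw [e, map_sum]
    simp [pderiv']
  have hmin : 0 < ⨅ i, h i := by
    obtain ⟨i, hi⟩ := exists_eq_ciInf_of_finite (f := h)
    rw [← hi]; exact hh i
  have hsup : ∀ j, s j ≤ ⨆ i, |s i| := fun j =>
    (le_abs_self _).trans (le_ciSup (Set.finite_range fun i => |s i|).bddAbove j)
  have hsup0 : 0 ≤ ⨆ i, |s i| := (hs k).trans (hsup k)
  rw [abs_of_nonneg (Finset.sum_nonneg fun j _ => mul_nonneg (hs j) (hp j))]
  refine le_trans ?_ (mul_le_mul_of_nonneg_left hsum (div_nonneg hsup0 hmin.le))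
  rw [Finset.mul_sum]
  refine Finset.sum_le_sum fun j _ => ?_
  rw [← mul_assoc]
  refine mul_le_mul_of_nonneg_right ?_ (hp j)
  rw [div_mul_eq_mul_div, le_div_iff₀ hmin]
  exact mul_le_mul (hsup j) (ciInf_le (Set.finite_range h).bddBelow j) hmin.le hsup0
end

section
/- For every index k and every s ∈ ℝ^N with s ≥ 0 entrywise, and every h ∈ ℝ^N with h_i > 0 for all i, the mixed second derivative of the magnetization satisfies |Σ_{j=1}^N s_j · ∂²m_k/∂h_1∂h_j (h)| ≤ (‖s‖_∞ / ĥ) · m_k(h) / h_1. -/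
namespace Ising

open Finset

/-- The value `±1` of a spin encoded as a Boolean. -/
def sp (b : Bool) : ℝ := if b then 1 else -1

/-! ### Four replicas in rotated coordinates -/

/-- The states of the four replicas at one site. -/
abbrev Quad := Bool × Bool × Bool × Bool

/-- The rotated single-site variables. They are an orthogonal transformation of the four spins; the
sign of the last one is chosen so that every monomial in the four has nonnegative sum over
`Quad`. -/
noncomputable def rot : Fin 4 → Quad → ℝ
  | 0, x => (sp x.1 + sp x.2.1 + sp x.2.2.1 + sp x.2.2.2) / 2
  | 1, x => (sp x.1 + sp x.2.1 - sp x.2.2.1 - sp x.2.2.2) / 2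
  | 2, x => (sp x.1 - sp x.2.1 + sp x.2.2.1 - sp x.2.2.2) / 2
  | 3, x => -(sp x.1 - sp x.2.1 - sp x.2.2.1 + sp x.2.2.2) / 2

theorem monomial_sum_nonneg (a b c d : ℕ) :
    0 ≤ ∑ x : Quad, rot 0 x ^ a * rot 1 x ^ b * rot 2 x ^ c * rot 3 x ^ d := by
  simp only [Fintype.sum_prod_type, Fintype.sum_bool, rot, sp]
  norm_num
  have e2 : ∀ n : ℕ, (-2 : ℝ) ^ n = (-1) ^ n * 2 ^ n := fun n => by
    rw [← mul_pow]; norm_num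
  have e0 : ∀ n : ℕ, (0 : ℝ) ≤ 0 ^ n := fun n => by positivity
  simp only [e2]
  rcases neg_one_pow_eq_or ℝ a with ha | ha <;> rcases neg_one_pow_eq_or ℝ b with hb | hb <;>
  rcases neg_one_pow_eq_or ℝ c with hc | hc <;> rcases neg_one_pow_eq_or ℝ d with hd | hd <;>
  simp only [ha, hb, hc, hd] <;> ring_nf <;> positivity

/-- The monomials in the rotated variables of one site. -/
noncomputable def siteMon : Submonoid (Quad → ℝ) := Submonoid.closure (Set.range rot)

theorem siteMon_sum_nonneg {g : Quad → ℝ} (hg : g ∈ siteMon) : 0 ≤ ∑ x, g x := by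
  have key : ∃ a b c d : ℕ, g = fun x => rot 0 x ^ a * rot 1 x ^ b * rot 2 x ^ c * rot 3 x ^ d := by
    induction hg using Submonoid.closure_induction with
    | mem x hx =>
      obtain ⟨r, rfl⟩ := hx
      fin_cases r
      · exact ⟨1, 0, 0, 0, by ext; simp⟩
      · exact ⟨0, 1, 0, 0, by ext; simp⟩
      · exact ⟨0, 0, 1, 0, by ext; simp⟩
      · exact ⟨0, 0, 0, 1, by ext; simp⟩
    | one => exact ⟨0, 0, 0, 0, by ext; simp⟩
    | mul x y _ _ hx hy =>
      obtain ⟨a, b, c, d, rfl⟩ := hx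
      obtain ⟨a', b', c', d', rfl⟩ := hy
      exact ⟨a + a', b + b', c + c', d + d', by ext; simp only [Pi.mul_apply]; ring⟩
  obtain ⟨a, b, c, d, rfl⟩ := key
  exact monomial_sum_nonneg a b c d

/-- Polynomials with nonnegative coefficients in the rotated variables of all sites, as functions
of the four-replica configuration. -/
noncomputable def cone (ι : Type*) : Subsemiring ((ι → Quad) → ℝ) :=
  Subsemiring.closure ({f | ∃ c : ℝ, 0 ≤ c ∧ f = fun _ => c} ∪ {f | ∃ r i, f = fun ω => rot r (ω i)})

theorem const_mem_cone {ι : Type*} {c : ℝ} (hc : 0 ≤ c) : (fun _ => c) ∈ cone ι :=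
  Subsemiring.subset_closure (Or.inl ⟨c, hc, rfl⟩)

theorem rot_mem_cone {ι : Type*} (r : Fin 4) (i : ι) : (fun ω => rot r (ω i)) ∈ cone ι :=
  Subsemiring.subset_closure (Or.inr ⟨r, i, rfl⟩)

theorem cone_sum_nonneg {ι : Type*} [Fintype ι] [DecidableEq ι]
    {f : (ι → Quad) → ℝ} (hf : f ∈ cone ι) :
    0 ≤ ∑ ω, f ω := by
  rw [cone, Subsemiring.mem_closure_iff] at hf
  induction hf using AddSubmonoid.closure_induction with
  | mem f hf =>
    have key : ∃ c : ℝ, 0 ≤ c ∧ ∃ g : ι → Quad → ℝ, (∀ i, g i ∈ siteMon) ∧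
        f = fun ω => c * ∏ i, g i (ω i) := by
      induction hf using Submonoid.closure_induction with
      | mem f hf =>
        rcases hf with ⟨c, hc, rfl⟩ | ⟨r, i, rfl⟩
        · exact ⟨c, hc, fun _ => 1, fun _ => siteMon.one_mem, by ext; simp⟩
        · refine ⟨1, zero_le_one, Pi.mulSingle i (rot r), fun j => ?_, ?_⟩
          · by_cases h : j = i
            · subst h
              simp only [Pi.mulSingle_eq_same]
              exact Submonoid.subset_closure ⟨r, rfl⟩
            · simp [h, siteMon.one_mem]
          · ext ω
            rw [Finset.prod_eq_single i]
            · simp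
            · intro j _ h; simp [h]
            · simp
      | one => exact ⟨1, zero_le_one, fun _ => 1, fun _ => siteMon.one_mem, by ext; simp⟩
      | mul x y _ _ hx hy =>
        obtain ⟨c, hc, g, hg, rfl⟩ := hx
        obtain ⟨c', hc', g', hg', rfl⟩ := hy
        refine ⟨c * c', mul_nonneg hc hc', fun i => g i * g' i,
          fun i => siteMon.mul_mem (hg i) (hg' i), ?_⟩
        ext ω
        simp only [Pi.mul_apply, Finset.prod_mul_distrib]
        ring
    obtain ⟨c, hc, g, hg, rfl⟩ := key
    rw [← Finset.mul_sum, ← Fintype.prod_sum]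
    exact mul_nonneg hc (Finset.prod_nonneg fun i _ => siteMon_sum_nonneg (hg i))
  | zero => simp
  | add x y _ _ hx hy =>
    simp only [Pi.add_apply, Finset.sum_add_distrib]
    exact add_nonneg hx hy

theorem cone_sum_exp_nonneg {ι : Type*} [Fintype ι] [DecidableEq ι]
    {f Q : (ι → Quad) → ℝ} (hf : f ∈ cone ι)
    (hQ : Q ∈ cone ι) : 0 ≤ ∑ ω, f ω * Real.exp (Q ω) := by
  have hsum : HasSum (fun n : ℕ => ∑ ω, f ω * ((n.factorial : ℝ)⁻¹ • Q ω ^ n))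
      (∑ ω, f ω * Real.exp (Q ω)) := by
    refine hasSum_sum fun ω _ => HasSum.mul_left _ ?_
    rw [Real.exp_eq_exp_ℝ]
    exact NormedSpace.exp_series_hasSum_exp' (𝕂 := ℝ) (Q ω)
  refine hsum.nonneg fun n => ?_
  have hc : (0 : ℝ) ≤ (n.factorial : ℝ)⁻¹ := by positivity
  exact cone_sum_nonneg ((cone ι).mul_mem hf
    ((cone ι).mul_mem (const_mem_cone hc) ((cone ι).pow_mem hQ n)))

/-! ### Gibbs expectations and the comparison inequalities -/

variable {ι : Type*} [Fintype ι] [DecidableEq ι]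

/-- The Boltzmann weight `exp (-H)`. -/
noncomputable def wt (J : ι → ι → ℝ) (g : ι → ℝ) (σ : ι → Bool) : ℝ :=
  Real.exp (1 / 2 * ∑ i, ∑ j, J i j * (sp (σ i) * sp (σ j)) + ∑ i, g i * sp (σ i))

/-- The partition function. -/
noncomputable def Zf (J : ι → ι → ℝ) (g : ι → ℝ) : ℝ := ∑ σ, wt J g σ

/-- The Gibbs expectation of `f`. -/
noncomputable def av (J : ι → ι → ℝ) (g : ι → ℝ) (f : (ι → Bool) → ℝ) : ℝ :=
  (∑ σ, f σ * wt J g σ) / Zf J g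

/-- The magnetization at `k`. -/
noncomputable def mag (J : ι → ι → ℝ) (g : ι → ℝ) (k : ι) : ℝ := av J g fun σ => sp (σ k)

/-- The truncated two-point function. -/
noncomputable def cov (J : ι → ι → ℝ) (g : ι → ℝ) (i j : ι) : ℝ :=
  av J g (fun σ => sp (σ i) * sp (σ j)) - mag J g i * mag J g j

/-- The truncated three-point function. -/
noncomputable def kap (J : ι → ι → ℝ) (g : ι → ℝ) (i j l : ι) : ℝ :=
  (av J g (fun σ => sp (σ i) * sp (σ j) * sp (σ l)) -
      av J g (fun σ => sp (σ i) * sp (σ j)) * mag J g l) -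
    (cov J g i l * mag J g j + mag J g i * cov J g j l)

theorem wt_pos (J : ι → ι → ℝ) (g : ι → ℝ) (σ : ι → Bool) : 0 < wt J g σ := Real.exp_pos _

theorem Zf_pos (J : ι → ι → ℝ) (g : ι → ℝ) : 0 < Zf J g :=
  Finset.sum_pos (fun _ _ => wt_pos _ _ _) Finset.univ_nonempty

theorem av_mul_Zf (J : ι → ι → ℝ) (g : ι → ℝ) (f : (ι → Bool) → ℝ) :
    ∑ σ, f σ * wt J g σ = av J g f * Zf J g :=
  (div_mul_cancel₀ _ (Zf_pos J g).ne').symm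

theorem sum_prod_arrow {A B : Type*} [Fintype A] [Fintype B] (F : (ι → A) → ℝ)
    (G : (ι → B) → ℝ) :
    ∑ ω : ι → A × B, F (fun i => (ω i).1) * G (fun i => (ω i).2) = (∑ a, F a) * ∑ b, G b := by
  rw [Finset.sum_mul_sum, ← Fintype.sum_prod_type']
  exact Fintype.sum_equiv (Equiv.arrowProdEquivProdArrow ι (fun _ => A) (fun _ => B)) _ _
    fun ω => rfl

theorem sum_quad (F₁ F₂ F₃ F₄ : (ι → Bool) → ℝ) :
    ∑ ω : ι → Quad, F₁ (fun i => (ω i).1) * (F₂ (fun i => (ω i).2.1) *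
      (F₃ (fun i => (ω i).2.2.1) * F₄ (fun i => (ω i).2.2.2))) =
      (∑ σ, F₁ σ) * ((∑ σ, F₂ σ) * ((∑ σ, F₃ σ) * ∑ σ, F₄ σ)) := by
  rw [← sum_prod_arrow F₃ F₄, ← sum_prod_arrow F₂, ← sum_prod_arrow F₁]

/-- The joint weight of four independent replicas, two in the field `g` and two in `g'`. -/
noncomputable def wt4 (J : ι → ι → ℝ) (g g' : ι → ℝ) (ω : ι → Quad) : ℝ :=
  wt J g (fun i => (ω i).1) * (wt J g (fun i => (ω i).2.1) *
    (wt J g' (fun i => (ω i).2.2.1) * wt J g' (fun i => (ω i).2.2.2)))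

/-- The positivity principle: the exponent of the joint weight lies in the cone, since the coupling
term is invariant under orthogonal transformations and the field term becomes
`(g + g') * rot 0 + (g - g') * rot 1`. -/
theorem cone_sum_wt4_nonneg {J : ι → ι → ℝ} (hJ : ∀ i j, 0 ≤ J i j) {g g' : ι → ℝ}
    (hg : ∀ i, |g' i| ≤ g i) {f : (ι → Quad) → ℝ} (hf : f ∈ cone ι) :
    0 ≤ ∑ ω, f ω * wt4 J g g' ω := by
  let Q : (ι → Quad) → ℝ :=
    ∑ i, ∑ j, ∑ r, (fun _ => 1 / 2 * J i j) * ((fun ω => rot r (ω i)) * (fun ω => rot r (ω j))) +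
    ∑ i, ((fun _ => g i + g' i) * (fun ω => rot 0 (ω i)) +
      (fun _ => g i - g' i) * (fun ω => rot 1 (ω i)))
  have hQ : Q ∈ cone ι := by
    refine (cone ι).add_mem (sum_mem fun i _ => sum_mem fun j _ => sum_mem fun r _ => ?_)
      (sum_mem fun i _ => (cone ι).add_mem ?_ ?_)
    · exact (cone ι).mul_mem (const_mem_cone (by have := hJ i j; positivity))
        ((cone ι).mul_mem (rot_mem_cone r i) (rot_mem_cone r j))
    · exact (cone ι).mul_mem (const_mem_cone (by have := abs_le.mp (hg i); linarith))
        (rot_mem_cone 0 i)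
    · exact (cone ι).mul_mem (const_mem_cone (by have := abs_le.mp (hg i); linarith))
        (rot_mem_cone 1 i)
  have hw : ∀ ω, wt4 J g g' ω = Real.exp (Q ω) := by
    intro ω
    simp only [wt4, wt, ← Real.exp_add]
    congr 1
    simp only [Q, Pi.add_apply, Finset.sum_apply, Pi.mul_apply, Finset.mul_sum,
      Fin.sum_univ_four]
    rw [show ∀ a b c d a' b' c' d' : ℝ, (a + a') + ((b + b') + ((c + c') + (d + d'))) =
      (a + b + c + d) + (a' + b' + c' + d') from fun _ _ _ _ _ _ _ _ => by ring]
    refine congrArg₂ (· + ·) ?_ ?_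
    · simp only [← Finset.sum_add_distrib]
      refine Finset.sum_congr rfl fun i _ => Finset.sum_congr rfl fun j _ => ?_
      simp only [rot]; ring
    · simp only [← Finset.sum_add_distrib]
      refine Finset.sum_congr rfl fun i _ => ?_
      simp only [rot]; ring
  simp only [hw]
  exact cone_sum_exp_nonneg hf hQ

theorem sum_wt4 (J : ι → ι → ℝ) (g g' : ι → ℝ) (F₁ F₂ F₃ F₄ : (ι → Bool) → ℝ) :
    ∑ ω : ι → Quad, (F₁ (fun i => (ω i).1) * F₂ (fun i => (ω i).2.1) *
      F₃ (fun i => (ω i).2.2.1) * F₄ (fun i => (ω i).2.2.2)) * wt4 J g g' ω =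
      (av J g F₁ * av J g F₂ * av J g' F₃ * av J g' F₄) * (Zf J g ^ 2 * Zf J g' ^ 2) := by
  have := sum_quad (fun σ => F₁ σ * wt J g σ) (fun σ => F₂ σ * wt J g σ)
    (fun σ => F₃ σ * wt J g' σ) (fun σ => F₄ σ * wt J g' σ)
  simp only [av_mul_Zf] at this
  rw [show ∀ a b c d z z' : ℝ, a * b * c * d * (z ^ 2 * z' ^ 2) =
    a * z * (b * z * (c * z' * (d * z'))) from fun _ _ _ _ _ _ => by ring, ← this]
  refine Finset.sum_congr rfl fun ω _ => ?_
  simp only [wt4]; ring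

theorem av_one (J : ι → ι → ℝ) (g : ι → ℝ) : av J g (fun _ => 1) = 1 := by
  simp only [av, one_mul]
  exact div_self (ne_of_gt (Zf_pos J g))

/-- Positivity of the first rotated variable in expectation. -/
theorem mag_add_mag_nonneg {J : ι → ι → ℝ} (hJ : ∀ i j, 0 ≤ J i j) {g g' : ι → ℝ}
    (hg : ∀ i, |g' i| ≤ g i) (k : ι) : 0 ≤ mag J g k + mag J g' k := by
  have h := cone_sum_wt4_nonneg hJ hg (rot_mem_cone 0 k)
  have e := sum_wt4 J g g'
  have h1 := e (fun σ => sp (σ k)) (fun _ => 1) (fun _ => 1) (fun _ => 1)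
  have h2 := e (fun _ => 1) (fun σ => sp (σ k)) (fun _ => 1) (fun _ => 1)
  have h3 := e (fun _ => 1) (fun _ => 1) (fun σ => sp (σ k)) (fun _ => 1)
  have h4 := e (fun _ => 1) (fun _ => 1) (fun _ => 1) (fun σ => sp (σ k))
  simp only [av_one, mul_one, one_mul] at h1 h2 h3 h4
  have hs : ∑ ω, rot 0 (ω k) * wt4 J g g' ω =
      (mag J g k + mag J g' k) * (Zf J g ^ 2 * Zf J g' ^ 2) := by
    simp only [rot, add_div, add_mul, div_mul_eq_mul_div, Finset.sum_add_distrib,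
      ← Finset.sum_div, h1, h2, h3, h4, mag]
    ring
  rw [hs] at h
  have := Zf_pos J g
  have := Zf_pos J g'
  exact nonneg_of_mul_nonneg_left h (by positivity)

/-- The comparison inequality extending GHS: covariances decrease when the field dominates another
one in absolute value. The difference is the joint expectation of
`rot 2 (ω i) * rot 3 (ω j) + rot 3 (ω i) * rot 2 (ω j)`. -/
theorem cov_le_cov {J : ι → ι → ℝ} (hJ : ∀ i j, 0 ≤ J i j) {g g' : ι → ℝ}
    (hg : ∀ i, |g' i| ≤ g i) (i j : ι) : cov J g i j ≤ cov J g' i j := by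
  have h := cone_sum_wt4_nonneg hJ hg ((cone ι).add_mem
    ((cone ι).mul_mem (rot_mem_cone 2 i) (rot_mem_cone 3 j))
    ((cone ι).mul_mem (rot_mem_cone 3 i) (rot_mem_cone 2 j)))
  have e := sum_wt4 J g g'
  have h1 := e (fun σ => sp (σ i) * sp (σ j)) (fun _ => 1) (fun _ => 1) (fun _ => 1)
  have h2 := e (fun _ => 1) (fun σ => sp (σ i) * sp (σ j)) (fun _ => 1) (fun _ => 1)
  have h3 := e (fun _ => 1) (fun _ => 1) (fun σ => sp (σ i) * sp (σ j)) (fun _ => 1)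
  have h4 := e (fun _ => 1) (fun _ => 1) (fun _ => 1) (fun σ => sp (σ i) * sp (σ j))
  have h5 := e (fun σ => sp (σ i)) (fun σ => sp (σ j)) (fun _ => 1) (fun _ => 1)
  have h6 := e (fun σ => sp (σ j)) (fun σ => sp (σ i)) (fun _ => 1) (fun _ => 1)
  have h7 := e (fun _ => 1) (fun _ => 1) (fun σ => sp (σ i)) (fun σ => sp (σ j))
  have h8 := e (fun _ => 1) (fun _ => 1) (fun σ => sp (σ j)) (fun σ => sp (σ i))
  simp only [av_one, mul_one, one_mul] at h1 h2 h3 h4 h5 h6 h7 h8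
  have hs : ∑ ω, (((fun ω : ι → Quad => rot 2 (ω i)) * (fun ω : ι → Quad => rot 3 (ω j)) +
      (fun ω : ι → Quad => rot 3 (ω i)) * (fun ω : ι → Quad => rot 2 (ω j))) ω) * wt4 J g g' ω =
      (cov J g' i j - cov J g i j) * (Zf J g ^ 2 * Zf J g' ^ 2) := by
    have : ∀ ω : ι → Quad, (((fun ω : ι → Quad => rot 2 (ω i)) * (fun ω : ι → Quad => rot 3 (ω j)) +
      (fun ω : ι → Quad => rot 3 (ω i)) * (fun ω : ι → Quad => rot 2 (ω j))) ω) * wt4 J g g' ω =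
      (sp (ω i).2.2.1 * sp (ω j).2.2.1 * wt4 J g g' ω +
        sp (ω i).2.2.2 * sp (ω j).2.2.2 * wt4 J g g' ω
        + sp (ω i).1 * sp (ω j).2.1 * wt4 J g g' ω + sp (ω j).1 * sp (ω i).2.1 * wt4 J g g' ω
        - sp (ω i).1 * sp (ω j).1 * wt4 J g g' ω - sp (ω i).2.1 * sp (ω j).2.1 * wt4 J g g' ω
        - sp (ω i).2.2.1 * sp (ω j).2.2.2 * wt4 J g g' ω
        - sp (ω j).2.2.1 * sp (ω i).2.2.2 * wt4 J g g' ω) / 2 := by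
      intro ω
      simp only [Pi.add_apply, Pi.mul_apply, rot]
      ring
    simp only [this, ← Finset.sum_div, Finset.sum_add_distrib, Finset.sum_sub_distrib,
      h1, h2, h3, h4, h5, h6, h7, h8, cov, mag]
    ring
  rw [hs] at h
  have := Zf_pos J g
  have := Zf_pos J g'
  have := nonneg_of_mul_nonneg_left h (by positivity)
  linarith

/-! ### Derivatives along lines -/

theorem hasDerivAt_wt (J : ι → ι → ℝ) (p q : ι → ℝ) (σ : ι → Bool) (t : ℝ) :
    HasDerivAt (fun t : ℝ => wt J (p + t • q) σ)
      ((∑ i, q i * sp (σ i)) * wt J (p + t • q) σ) t := by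
  have h : HasDerivAt (fun t : ℝ => 1 / 2 * ∑ i, ∑ j, J i j * (sp (σ i) * sp (σ j)) +
      ∑ i, (p + t • q) i * sp (σ i)) (∑ i, q i * sp (σ i)) t := by
    refine HasDerivAt.const_add _ (HasDerivAt.fun_sum fun i _ => ?_)
    simp only [Pi.add_apply, Pi.smul_apply, smul_eq_mul]
    exact (((hasDerivAt_mul_const (q i)).const_add (p i)).mul_const _)
  exact h.exp.congr_deriv (mul_comm _ _)

theorem hasDerivAt_sum_wt (J : ι → ι → ℝ) (p q : ι → ℝ) (f : (ι → Bool) → ℝ) (t : ℝ) :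
    HasDerivAt (fun t : ℝ => ∑ σ, f σ * wt J (p + t • q) σ)
      (∑ j, q j * (av J (p + t • q) (fun σ => f σ * sp (σ j))) * Zf J (p + t • q)) t := by
  have h := HasDerivAt.fun_sum (u := Finset.univ)
    fun σ _ => (hasDerivAt_wt J p q σ t).const_mul (f σ)
  refine h.congr_deriv ?_
  simp only [mul_assoc (q _), ← av_mul_Zf, Finset.mul_sum, Finset.sum_mul]
  rw [Finset.sum_comm]
  exact Finset.sum_congr rfl fun _ _ => Finset.sum_congr rfl fun _ _ => by ring

theorem hasDerivAt_Zf (J : ι → ι → ℝ) (p q : ι → ℝ) (t : ℝ) :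
    HasDerivAt (fun t : ℝ => Zf J (p + t • q))
      ((∑ j, q j * mag J (p + t • q) j) * Zf J (p + t • q)) t := by
  have := hasDerivAt_sum_wt J p q (fun _ => 1) t
  simp only [one_mul, ← Finset.sum_mul] at this
  exact this

theorem hasDerivAt_av (J : ι → ι → ℝ) (p q : ι → ℝ) (f : (ι → Bool) → ℝ) (t : ℝ) :
    HasDerivAt (fun t : ℝ => av J (p + t • q) f)
      (∑ j, q j * (av J (p + t • q) (fun σ => f σ * sp (σ j)) -
        av J (p + t • q) f * mag J (p + t • q) j)) t := by
  have hZ := (Zf_pos J (p + t • q)).ne'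
  have h := (hasDerivAt_sum_wt J p q f t).div (hasDerivAt_Zf J p q t) hZ
  refine h.congr_deriv ?_
  rw [av_mul_Zf]
  simp only [mul_sub, Finset.sum_sub_distrib, ← Finset.sum_mul]
  have e : ∑ j, q j * (av J (p + t • q) f * mag J (p + t • q) j) =
      av J (p + t • q) f * ∑ j, q j * mag J (p + t • q) j := by
    rw [Finset.mul_sum]
    exact Finset.sum_congr rfl fun _ _ => by ring
  rw [e]
  field_simp

theorem hasDerivAt_mag (J : ι → ι → ℝ) (p q : ι → ℝ) (k : ι) (t : ℝ) :
    HasDerivAt (fun t : ℝ => mag J (p + t • q) k) (∑ j, q j * cov J (p + t • q) k j) t :=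
  hasDerivAt_av J p q _ t

theorem hasDerivAt_cov (J : ι → ι → ℝ) (p q : ι → ℝ) (i j : ι) (t : ℝ) :
    HasDerivAt (fun t : ℝ => cov J (p + t • q) i j) (∑ l, q l * kap J (p + t • q) i j l) t := by
  have h := (hasDerivAt_av J p q (fun σ => sp (σ i) * sp (σ j)) t).sub
    ((hasDerivAt_mag J p q i t).mul (hasDerivAt_mag J p q j t))
  refine h.congr_deriv ?_
  simp only [kap, Finset.sum_mul, Finset.mul_sum, ← Finset.sum_add_distrib,
    ← Finset.sum_sub_distrib]
  exact Finset.sum_congr rfl fun _ _ => by ring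

theorem differentiable_av (J : ι → ι → ℝ) (f : (ι → Bool) → ℝ) :
    Differentiable ℝ fun g => av J g f := by
  intro g
  have hZ := (Zf_pos J g).ne'
  simp only [Zf, wt] at hZ
  simp only [av, Zf, wt]
  fun_prop (disch := exact hZ)

theorem pderiv'_eq {N : ℕ} {F : (Fin N → ℝ) → ℝ} {j : Fin N} {g : Fin N → ℝ} {a : ℝ}
    (hF : DifferentiableAt ℝ F g)
    (h : HasDerivAt (fun t : ℝ => F (g + t • Pi.single j 1)) a 0) : pderiv' F j g = a := by
  rw [pderiv', ← hF.lineDeriv_eq_fderiv]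
  exact h.deriv

theorem pderiv'_mag {N : ℕ} (J : Fin N → Fin N → ℝ) (k j : Fin N) (g : Fin N → ℝ) :
    pderiv' (fun g => mag J g k) j g = cov J g k j := by
  refine pderiv'_eq (differentiable_av J _ g) ?_
  refine (hasDerivAt_mag J g (Pi.single j 1) k 0).congr_deriv ?_
  rw [Finset.sum_eq_single j] <;> simp +contextual

theorem pderiv'_cov {N : ℕ} (J : Fin N → Fin N → ℝ) (i j l : Fin N) (g : Fin N → ℝ) :
    pderiv' (fun g => cov J g i j) l g = kap J g i j l := by
  refine pderiv'_eq ?_ ?_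
  · exact (differentiable_av J _ g).sub ((differentiable_av J _ g).mul (differentiable_av J _ g))
  refine (hasDerivAt_cov J g (Pi.single l 1) i j 0).congr_deriv ?_
  rw [Finset.sum_eq_single l] <;> simp +contextual

theorem kap_rotate (J : ι → ι → ℝ) (g : ι → ℝ) (i j l : ι) : kap J g i j l = kap J g l i j := by
  have e1 : (fun σ : ι → Bool => sp (σ l) * sp (σ i) * sp (σ j)) =
      fun σ => sp (σ i) * sp (σ j) * sp (σ l) := by ext; ring
  have e2 : (fun σ : ι → Bool => sp (σ l) * sp (σ i)) = fun σ => sp (σ i) * sp (σ l) := by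
    ext; ring
  have e3 : (fun σ : ι → Bool => sp (σ l) * sp (σ j)) = fun σ => sp (σ j) * sp (σ l) := by
    ext; ring
  simp only [kap, cov, e1, e2, e3]
  ring

/-- The GHS inequality. -/
theorem kap_nonpos {J : ι → ι → ℝ} (hJ : ∀ i j, 0 ≤ J i j) {g : ι → ℝ} (hg : ∀ i, 0 ≤ g i)
    (i j l : ι) : kap J g i j l ≤ 0 := by
  have hd := hasDerivAt_cov J g (Pi.single l 1) i j 0
  have hs : ∑ l', (Pi.single l 1 : ι → ℝ) l' * kap J (g + (0 : ℝ) • Pi.single l 1) i j l' =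
      kap J g i j l := by
    rw [Finset.sum_eq_single l] <;> simp +contextual
  rw [hs] at hd
  have hanti : AntitoneOn (fun t : ℝ => cov J (g + t • Pi.single l 1) i j) (Set.Ici 0) := by
    intro a ha b _ hab
    refine cov_le_cov hJ (fun m => ?_) i j
    have ha : (0 : ℝ) ≤ a := ha
    have h1 : 0 ≤ (Pi.single l 1 : ι → ℝ) m := by
      by_cases hm : m = l <;> simp [hm]
    simp only [Pi.add_apply, Pi.smul_apply, smul_eq_mul]
    rw [abs_of_nonneg (add_nonneg (hg m) (mul_nonneg ha h1))]
    gcongr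
  have h2 := hanti.derivWithin_nonpos (x := 0)
  rwa [hd.hasDerivWithinAt.derivWithin (uniqueDiffOn_Ici (0 : ℝ) 0 Set.self_mem_Ici)] at h2

/-! ### The scalar inequality -/

theorem tanh_eq_exp (z : ℝ) :
    Real.tanh z = (Real.exp (2 * z) - 1) / (Real.exp (2 * z) + 1) := by
  have : Real.exp (2 * z) = Real.exp z / Real.exp (-z) := by rw [← Real.exp_sub]; ring_nf
  rw [Real.tanh_eq, this]
  field_simp

theorem hasDerivAt_tanh (z : ℝ) : HasDerivAt Real.tanh (1 - Real.tanh z ^ 2) z := by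
  have h := (Real.hasDerivAt_sinh z).fun_div (Real.hasDerivAt_cosh z) (Real.cosh_pos z).ne'
  have e : Real.tanh = fun z => Real.sinh z / Real.cosh z :=
    funext Real.tanh_eq_sinh_div_cosh
  rw [e]
  refine h.congr_deriv ?_
  have := (Real.cosh_pos z).ne'
  field_simp

-- The decimal constants in the next two lemmas leave enough slack for `key_exp`; `2.2` and `1.1` are
-- close to the tightest points.

theorem two_sq_le_exp (w : ℝ) (hw : 0 ≤ w) : 2 * w ^ 2 + 0.05 ≤ 1 + Real.exp w := by
  have h := Real.sum_le_exp_of_nonneg hw 8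
  simp only [Finset.sum_range_succ, Finset.sum_range_zero, Nat.factorial] at h
  norm_num at h
  nlinarith [sq_nonneg (w - 2.2), mul_nonneg hw (sq_nonneg (w - 2.2)),
    sq_nonneg (w * (w - 2.2)), mul_nonneg hw (sq_nonneg (w * (w - 2.2))),
    sq_nonneg (w ^ 2 * (w - 2.2)), pow_nonneg hw 7]

theorem lin_exp (w : ℝ) : 3 * w - 0.3 ≤ Real.exp w := by
  have h := Real.add_one_le_exp (w - 1.1)
  have h2 : Real.exp w = Real.exp 1.1 * Real.exp (w - 1.1) := by rw [← Real.exp_add]; ring_nf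
  have h3 : (3:ℝ) ≤ Real.exp 1.1 := by
    have := Real.sum_le_exp_of_nonneg (x := 1.1) (by norm_num) 6
    simp only [Finset.sum_range_succ, Finset.sum_range_zero, Nat.factorial] at this
    norm_num at this ⊢
    linarith
  nlinarith [Real.exp_pos (w - 1.1)]

theorem key_exp (x c : ℝ) (hx : 0 ≤ x) (hc : 0 ≤ c) :
    2 * x ^ 2 + 2 * x * c ≤
      Real.exp (2 * c) * (Real.exp (2 * x) / 4 - x / 2) + 1 / 4 + x / 2 := by
  have h1 := two_sq_le_exp (2 * x) (by linarith)
  have h2 := lin_exp (2 * x)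
  have h3 := Real.quadratic_le_exp_of_nonneg (x := 2 * c) (by linarith)
  have h4 := Real.add_one_le_exp (2 * x)
  have h5 : (1 + 2 * c + (2 * c) ^ 2 / 2) * (Real.exp (2 * x) / 4 - x / 2) ≤
      Real.exp (2 * c) * (Real.exp (2 * x) / 4 - x / 2) := by gcongr; linarith
  have h6 : (1 / 4 : ℝ) * c ^ 2 ≤ (Real.exp (2 * x) / 4 - x / 2) * c ^ 2 := by gcongr; linarith
  have h7 : 0 ≤ c * (Real.exp (2 * x) - (3 * (2 * x) - 0.3)) := mul_nonneg hc (by linarith)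
  nlinarith [sq_nonneg (c - 0.15)]

/-- The scalar inequality closing the argument. Here `1 - tanh (x + c) ^ 2` is the variance of the
spin conditioned upon, `x` its external field and `c` the effective field on it. -/
theorem scalar_bound {x c c' s d d' : ℝ} (hx : 0 ≤ x) (hc : 0 ≤ c) (hcc : c' ≤ c)
    (hs : 0 ≤ s) (hd : 0 ≤ d)
    (hd' : -d' * (1 - Real.tanh c) ≤ s + Real.tanh c * d) :
    x * (2 * Real.tanh (x + c) * (1 - Real.tanh (x + c) ^ 2) * (x + c') * d -
      (1 - Real.tanh (x + c) ^ 2) * d') ≤ s + Real.tanh (x + c) * d := by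
  have hu1 : 2 * x + 1 ≤ Real.exp (2 * x) := Real.add_one_le_exp _
  have hu2 : 4 * x ≤ Real.exp (2 * x) := by
    have := Real.two_mul_le_exp (x := 2 * x); linarith
  have hE1 : 2 * c + 1 ≤ Real.exp (2 * c) := Real.add_one_le_exp _
  have hk := key_exp x c hx hc
  have hy : Real.exp (2 * (x + c)) = Real.exp (2 * x) * Real.exp (2 * c) := by
    rw [← Real.exp_add]; ring_nf
  rw [tanh_eq_exp, hy]
  rw [tanh_eq_exp] at hd'
  generalize Real.exp (2 * x) = u at *
  generalize Real.exp (2 * c) = E at *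
  have hu : 1 ≤ u := by linarith
  have hE : 1 ≤ E := by linarith
  have huE : 1 ≤ u * E := one_le_mul_of_one_le_of_one_le hu hE
  have hd2 : -d' * 2 ≤ s * (E + 1) + (E - 1) * d := by
    have h0 : 0 < E + 1 := by linarith
    have := mul_le_mul_of_nonneg_right hd' h0.le
    field_simp at this
    linarith
  have hV : 1 - ((u * E - 1) / (u * E + 1)) ^ 2 = 4 * (u * E) / (u * E + 1) ^ 2 := by
    field_simp; ring
  rw [hV]
  have R1 : 2 * x * (u * E) * (E + 1) ≤ (u * E + 1) ^ 2 := by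
    have a1 : 2 * x * (u * E) * (E + 1) ≤ u / 2 * (u * E) * (2 * E) := by gcongr <;> linarith
    nlinarith
  have R2 : x * (8 * (u * E) * (u * E - 1) * (x + c) + 2 * (u * E) * (u * E + 1) * (E - 1)) ≤
      (u * E - 1) * (u * E + 1) ^ 2 := by
    have hk' := mul_le_mul_of_nonneg_left hk (by nlinarith : 0 ≤ 4 * (u * E) * (u * E - 1))
    have hxu : 0 ≤ (u - 4 * x) * (E * (u * E - 1)) :=
      mul_nonneg (by linarith) (mul_nonneg (by linarith) (by linarith))
    have hz : 0 ≤ x * E * (u - 1) := by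
      have : 0 ≤ u - 1 := by linarith
      positivity
    nlinarith
  have hM : 0 ≤ (u * E - 1) / (u * E + 1) := div_nonneg (by linarith) (by linarith)
  have step : 2 * ((u * E - 1) / (u * E + 1)) * (4 * (u * E) / (u * E + 1) ^ 2) * (x + c') * d ≤
      2 * ((u * E - 1) / (u * E + 1)) * (4 * (u * E) / (u * E + 1) ^ 2) * (x + c) * d := by
    gcongr
  have step2 : 4 * (u * E) / (u * E + 1) ^ 2 * -d' ≤
      4 * (u * E) / (u * E + 1) ^ 2 * ((s * (E + 1) + (E - 1) * d) / 2) := by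
    gcongr; linarith
  have fin : x * (2 * ((u * E - 1) / (u * E + 1)) * (4 * (u * E) / (u * E + 1) ^ 2) * (x + c) * d +
      4 * (u * E) / (u * E + 1) ^ 2 * ((s * (E + 1) + (E - 1) * d) / 2)) ≤
      s + (u * E - 1) / (u * E + 1) * d := by
    have e : s + (u * E - 1) / (u * E + 1) * d - x * (2 * ((u * E - 1) / (u * E + 1)) *
        (4 * (u * E) / (u * E + 1) ^ 2) * (x + c) * d +
      4 * (u * E) / (u * E + 1) ^ 2 * ((s * (E + 1) + (E - 1) * d) / 2)) =
      s * ((u * E + 1) ^ 2 - 2 * x * (u * E) * (E + 1)) / (u * E + 1) ^ 2 +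
      d * ((u * E - 1) * (u * E + 1) ^ 2 - x * (8 * (u * E) * (u * E - 1) * (x + c) +
        2 * (u * E) * (u * E + 1) * (E - 1))) / (u * E + 1) ^ 3 := by
      field_simp; ring
    have : 0 ≤ s * ((u * E + 1) ^ 2 - 2 * x * (u * E) * (E + 1)) / (u * E + 1) ^ 2 +
      d * ((u * E - 1) * (u * E + 1) ^ 2 - x * (8 * (u * E) * (u * E - 1) * (x + c) +
        2 * (u * E) * (u * E + 1) * (E - 1))) / (u * E + 1) ^ 3 := by
      have := sub_nonneg.2 R1
      have := sub_nonneg.2 R2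
      positivity
    linarith
  refine le_trans (mul_le_mul_of_nonneg_left ?_ hx) fin
  linarith

/-! ### Conditioning on one spin -/

theorem wt_neg (J : ι → ι → ℝ) (g : ι → ℝ) (σ : ι → Bool) :
    wt J (-g) σ = wt J g fun i => !σ i := by
  have h : ∀ b, sp (!b) = -sp b := fun b => by cases b <;> simp [sp]
  simp only [wt, h, Pi.neg_apply, neg_mul, mul_neg, neg_neg]

theorem sum_flip (F : (ι → Bool) → ℝ) : ∑ σ : ι → Bool, F (fun i => !σ i) = ∑ σ, F σ :=
  Fintype.sum_equiv (Equiv.arrowCongr (Equiv.refl ι) Equiv.boolNot) _ _ fun _ => rfl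

theorem Zf_neg (J : ι → ι → ℝ) (g : ι → ℝ) : Zf J (-g) = Zf J g := by
  simp only [Zf, wt_neg]
  exact sum_flip fun σ => wt J g σ

theorem mag_neg (J : ι → ι → ℝ) (g : ι → ℝ) (k : ι) : mag J (-g) k = -mag J g k := by
  have h : ∀ b, sp b = -sp (!b) := fun b => by cases b <;> simp [sp]
  simp only [mag, av, Zf_neg, wt_neg]
  rw [← neg_div, ← Finset.sum_neg_distrib]
  congr 1
  rw [← sum_flip fun σ => -(sp (σ k) * wt J g σ)]
  refine Finset.sum_congr rfl fun σ _ => ?_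
  rw [h (σ k)]
  simp

/-- Magnetizations are monotone; the smaller field may have negative entries. -/
theorem mag_mono {J : ι → ι → ℝ} (hJ : ∀ i j, 0 ≤ J i j) {g g' : ι → ℝ}
    (hg : ∀ i, |g' i| ≤ g i) (k : ι) : mag J g' k ≤ mag J g k := by
  have := mag_add_mag_nonneg hJ (g := g) (g' := -g') (by simpa using hg) k
  rw [mag_neg] at this
  linarith

/-- The couplings among the spins other than `o`. -/
def Jr (J : ι → ι → ℝ) (o : ι) : {j // j ≠ o} → {j // j ≠ o} → ℝ := fun i j => J i j

/-- The field which a spin `+1` at `o` exerts on the other spins. -/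
def bd (J : ι → ι → ℝ) (o : ι) : {j // j ≠ o} → ℝ := fun j => J o j

/-- The external field at the sites other than `o`. -/
def rs (o : ι) (g : ι → ℝ) : {j // j ≠ o} → ℝ := fun j => g j

/-- The effective field which the other spins, in the external field `g`, exert on the spin at `o`;
the magnetization there is the hyperbolic tangent of its external field plus this one. -/
noncomputable def eff (J : ι → ι → ℝ) (o : ι) (g : {j // j ≠ o} → ℝ) : ℝ :=
  (Real.log (Zf (Jr J o) (bd J o + g)) - Real.log (Zf (Jr J o) (-bd J o + g))) / 2

theorem wt_split {J : ι → ι → ℝ} (hJs : ∀ i j, J i j = J j i) (o : ι) (g : ι → ℝ)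
    (σ : ι → Bool) :
    wt J g σ = Real.exp (1 / 2 * J o o) * (Real.exp (sp (σ o) * g o) *
      wt (Jr J o) (sp (σ o) • bd J o + rs o g) fun j => σ j) := by
  have h1 : sp (σ o) * sp (σ o) = 1 := by cases σ o <;> simp [sp]
  simp only [wt, ← Real.exp_add]
  congr 1
  simp only [Fintype.sum_eq_add_sum_subtype_ne _ o, Finset.sum_add_distrib, h1, Jr, bd, rs,
    Pi.add_apply, Pi.smul_apply, smul_eq_mul, add_mul]
  have e1 : ∑ i : {j // j ≠ o}, J i o * (sp (σ i) * sp (σ o)) =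
      ∑ j : {j // j ≠ o}, sp (σ o) * J o j * sp (σ j) :=
    Finset.sum_congr rfl fun i _ => by rw [hJs i o]; ring
  have e2 : ∑ j : {j // j ≠ o}, J o j * (sp (σ o) * sp (σ j)) =
      ∑ j : {j // j ≠ o}, sp (σ o) * J o j * sp (σ j) :=
    Finset.sum_congr rfl fun i _ => by ring
  rw [e1, e2]
  ring

theorem sum_split (o : ι) (F : Bool → ({j // j ≠ o} → Bool) → ℝ) :
    ∑ σ : ι → Bool, F (σ o) (fun j => σ j) = (∑ τ, F true τ) + ∑ τ, F false τ := by
  have := Fintype.sum_equiv (Equiv.funSplitAt o Bool) (fun σ => F (σ o) fun j => σ j)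
    (fun x => F x.1 x.2) fun _ => rfl
  rw [this, Fintype.sum_prod_type, Fintype.sum_bool]

/-- The law of total expectation, conditioning on the spin at `o`. -/
theorem av_split {J : ι → ι → ℝ} (hJs : ∀ i j, J i j = J j i) (o : ι) (g : ι → ℝ)
    (φ : Bool → ℝ) (ψ : ({j // j ≠ o} → Bool) → ℝ) :
    av J g (fun σ => φ (σ o) * ψ fun j => σ j) =
      φ true * ((1 + Real.tanh (g o + eff J o (rs o g))) / 2) *
        av (Jr J o) (bd J o + rs o g) ψ +
      φ false * ((1 - Real.tanh (g o + eff J o (rs o g))) / 2) *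
        av (Jr J o) (-bd J o + rs o g) ψ := by
  have main : ∀ (φ : Bool → ℝ) (ψ : ({j // j ≠ o} → Bool) → ℝ),
      ∑ σ, (φ (σ o) * ψ fun j => σ j) * wt J g σ = Real.exp (1 / 2 * J o o) *
      (φ true * Real.exp (g o) * (av (Jr J o) (bd J o + rs o g) ψ *
        Zf (Jr J o) (bd J o + rs o g)) +
      φ false * Real.exp (-g o) * (av (Jr J o) (-bd J o + rs o g) ψ *
        Zf (Jr J o) (-bd J o + rs o g))) := by
    intro φ ψ
    simp only [wt_split hJs o g]
    rw [sum_split o fun b τ => φ b * ψ τ * (Real.exp (1 / 2 * J o o) * (Real.exp (sp b * g o) *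
      wt (Jr J o) (sp b • bd J o + rs o g) τ))]
    simp only [← av_mul_Zf, mul_add, Finset.mul_sum, sp]
    congr 1 <;> refine Finset.sum_congr rfl fun τ _ => ?_ <;> simp <;> ring
  have hZ : Zf J g = Real.exp (1 / 2 * J o o) *
      (Real.exp (g o) * Zf (Jr J o) (bd J o + rs o g) +
      Real.exp (-g o) * Zf (Jr J o) (-bd J o + rs o g)) := by
    have := main (fun _ => 1) (fun _ => 1)
    simpa [av_one, Zf] using this
  have hp := Zf_pos (Jr J o) (bd J o + rs o g)
  have hm := Zf_pos (Jr J o) (-bd J o + rs o g)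
  have he : Real.exp (2 * (g o + eff J o (rs o g))) = Real.exp (g o) ^ 2 *
      (Zf (Jr J o) (bd J o + rs o g) / Zf (Jr J o) (-bd J o + rs o g)) := by
    rw [← Real.exp_log (div_pos hp hm), Real.log_div hp.ne' hm.ne', ← Real.exp_nat_mul,
      ← Real.exp_add, eff]
    congr 1
    push_cast
    ring
  rw [tanh_eq_exp, he, av, main, hZ, Real.exp_neg]
  have hx := Real.exp_pos (g o)
  have hK := Real.exp_pos (1 / 2 * J o o)
  field_simp
  ring

theorem mag_self {J : ι → ι → ℝ} (hJs : ∀ i j, J i j = J j i) (o : ι) (g : ι → ℝ) :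
    mag J g o = Real.tanh (g o + eff J o (rs o g)) := by
  have h := av_split hJs o g sp fun _ => 1
  simp only [mul_one, av_one, sp] at h
  rw [mag]
  simp only [sp]
  rw [h]
  simp
  ring

theorem cov_self {J : ι → ι → ℝ} (hJs : ∀ i j, J i j = J j i) (o : ι) (g : ι → ℝ) :
    cov J g o o = 1 - Real.tanh (g o + eff J o (rs o g)) ^ 2 := by
  have h1 : (fun σ : ι → Bool => sp (σ o) * sp (σ o)) = fun _ => 1 := by
    ext σ; cases σ o <;> simp [sp]
  rw [cov, h1, av_one, mag_self hJs]
  ring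

theorem mag_other {J : ι → ι → ℝ} (hJs : ∀ i j, J i j = J j i) (o : ι) (g : ι → ℝ)
    (k : {j // j ≠ o}) :
    mag J g k = (mag (Jr J o) (bd J o + rs o g) k + mag (Jr J o) (-bd J o + rs o g) k) / 2 +
      Real.tanh (g o + eff J o (rs o g)) *
      ((mag (Jr J o) (bd J o + rs o g) k - mag (Jr J o) (-bd J o + rs o g) k) / 2) := by
  have h := av_split hJs o g (fun _ => 1) fun τ => sp (τ k)
  simp only [one_mul] at h
  simp only [mag]
  rw [h]
  ring

theorem cov_other {J : ι → ι → ℝ} (hJs : ∀ i j, J i j = J j i) (o : ι) (g : ι → ℝ)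
    (k : {j // j ≠ o}) :
    cov J g o k = (1 - Real.tanh (g o + eff J o (rs o g)) ^ 2) *
      ((mag (Jr J o) (bd J o + rs o g) k - mag (Jr J o) (-bd J o + rs o g) k) / 2) := by
  have h := av_split hJs o g sp fun τ => sp (τ k)
  rw [cov, mag_self hJs, mag_other hJs, h]
  simp only [mag, sp]
  simp
  ring

/-! ### Estimates along a ray -/

theorem hasDerivAt_eff (J : ι → ι → ℝ) (o : ι) (q : {j // j ≠ o} → ℝ) (t : ℝ) :
    HasDerivAt (fun t : ℝ => eff J o (t • q))
      ((∑ j, q j * (mag (Jr J o) (bd J o + t • q) j - mag (Jr J o) (-bd J o + t • q) j)) / 2)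
      t := by
  have h1 := (hasDerivAt_Zf (Jr J o) (bd J o) q t).log (Zf_pos _ _).ne'
  have h2 := (hasDerivAt_Zf (Jr J o) (-bd J o) q t).log (Zf_pos _ _).ne'
  refine ((h1.sub h2).div_const 2).congr_deriv ?_
  rw [mul_div_cancel_right₀ _ (Zf_pos _ _).ne', mul_div_cancel_right₀ _ (Zf_pos _ _).ne',
    ← Finset.sum_sub_distrib]
  simp only [mul_sub]

theorem abs_neg_add_le {u q t : ℝ} (hu : 0 ≤ u) (hq : 0 ≤ q) (ht : 0 ≤ t) :
    |-u + t * q| ≤ u + t * q := by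
  have := mul_nonneg ht hq
  rw [abs_le]
  constructor <;> linarith

/-- By `cov_le_cov`, the derivative of this difference along the ray is nonpositive. -/
theorem mag_diff_anti {J : ι → ι → ℝ} (hJ : ∀ i j, 0 ≤ J i j) {u q : ι → ℝ}
    (hu : ∀ i, 0 ≤ u i) (hq : ∀ i, 0 ≤ q i) (k : ι) :
    AntitoneOn (fun t : ℝ => mag J (u + t • q) k - mag J (-u + t • q) k) (Set.Ici 0) := by
  have hd : ∀ t : ℝ, HasDerivAt (fun t : ℝ => mag J (u + t • q) k - mag J (-u + t • q) k) _ t :=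
    fun t => (hasDerivAt_mag J u q k t).fun_sub (hasDerivAt_mag J (-u) q k t)
  refine antitoneOn_of_deriv_nonpos (convex_Ici 0)
    (fun t _ => (hd t).continuousAt.continuousWithinAt)
    (fun t _ => (hd t).differentiableAt.differentiableWithinAt) fun t ht => ?_
  rw [interior_Ici] at ht
  rw [(hd t).deriv, ← Finset.sum_sub_distrib]
  refine Finset.sum_nonpos fun j _ => ?_
  rw [← mul_sub]
  refine mul_nonpos_of_nonneg_of_nonpos (hq j) (sub_nonpos.2 (cov_le_cov hJ (fun i => ?_) k j))
  exact abs_neg_add_le (hu i) (hq i) (le_of_lt ht)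

/-- Along a ray with nonnegative direction the effective field is concave and vanishes at `0`, so it
is at least its derivative. -/
theorem eff_deriv_le {J : ι → ι → ℝ} (hJ : ∀ i j, 0 ≤ J i j) (o : ι) {q : {j // j ≠ o} → ℝ}
    (hq : ∀ i, 0 ≤ q i) :
    (∑ j, q j * (mag (Jr J o) (bd J o + (1 : ℝ) • q) j -
      mag (Jr J o) (-bd J o + (1 : ℝ) • q) j)) / 2 ≤ eff J o ((1 : ℝ) • q) := by
  obtain ⟨ξ, hξ, he⟩ := exists_hasDerivAt_eq_slope (fun t : ℝ => eff J o (t • q)) _ zero_lt_one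
    (fun t _ => (hasDerivAt_eff J o q t).continuousAt.continuousWithinAt)
    (fun t _ => hasDerivAt_eff J o q t)
  have h0 : eff J o ((0 : ℝ) • q) = 0 := by
    simp [eff, Zf_neg]
  rw [h0, sub_zero, sub_zero, div_one] at he
  rw [← he]
  refine div_le_div_of_nonneg_right
    (Finset.sum_le_sum fun j _ => mul_le_mul_of_nonneg_left ?_ (hq j)) two_pos.le
  exact mag_diff_anti (J := Jr J o) (fun i j => hJ i j) (fun i => hJ o i) hq j
    (Set.mem_Ici.2 hξ.1.le) (Set.mem_Ici.2 zero_le_one) hξ.2.le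

/-- Along a ray with nonnegative direction a magnetization is concave and vanishes at `0`, so it is at
least its derivative. -/
theorem mag_deriv_le {J : ι → ι → ℝ} (hJ : ∀ i j, 0 ≤ J i j) {q : ι → ℝ}
    (hq : ∀ i, 0 ≤ q i) (k : ι) :
    ∑ j, q j * cov J (0 + (1 : ℝ) • q) k j ≤ mag J (0 + (1 : ℝ) • q) k := by
  obtain ⟨ξ, hξ, he⟩ := exists_hasDerivAt_eq_slope (fun t : ℝ => mag J (0 + t • q) k) _ zero_lt_one
    (fun t _ => (hasDerivAt_mag J 0 q k t).continuousAt.continuousWithinAt)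
    (fun t _ => hasDerivAt_mag J 0 q k t)
  have h0 : mag J (0 + (0 : ℝ) • q) k = 0 := by
    have := mag_neg J 0 k
    simp only [neg_zero] at this
    simp only [zero_smul, add_zero]
    linarith
  rw [h0, sub_zero, sub_zero, div_one] at he
  rw [← he]
  gcongr with j
  · exact hq j
  · refine cov_le_cov hJ (fun i => ?_) k j
    simp only [zero_add, Pi.smul_apply, smul_eq_mul, one_mul]
    rw [abs_of_nonneg (mul_nonneg hξ.1.le (hq i))]
    exact mul_le_of_le_one_left (hq i) hξ.2.le

theorem sum_cov_nonneg {J : ι → ι → ℝ} (hJ : ∀ i j, 0 ≤ J i j) {u q : ι → ℝ}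
    (hu : ∀ i, 0 ≤ u i) (hq : ∀ i, 0 ≤ q i) (k : ι) :
    0 ≤ ∑ j, q j * cov J (u + (1 : ℝ) • q) k j := by
  have hmono : MonotoneOn (fun t : ℝ => mag J (u + t • q) k) (Set.Ici 1) := by
    intro a ha b _ hab
    refine mag_mono hJ (fun i => ?_) k
    have ha : (0 : ℝ) ≤ a := zero_le_one.trans ha
    simp only [Pi.add_apply, Pi.smul_apply, smul_eq_mul]
    rw [abs_of_nonneg (add_nonneg (hu i) (mul_nonneg ha (hq i)))]
    have := mul_le_mul_of_nonneg_right hab (hq i)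
    linarith
  have h2 := hmono.derivWithin_nonneg (x := 1)
  rwa [(hasDerivAt_mag J u q k 1).hasDerivWithinAt.derivWithin
    (uniqueDiffOn_Ici (1 : ℝ) 1 Set.self_mem_Ici)] at h2

/-- The bound on the radial derivative of the covariance of the spins at `o` and `k`, obtained by
conditioning on the spin at `o`: with `c` the effective field on it and `s`, `d` half the sum and
half the difference of the two conditional magnetizations at `k`, the covariance is
`(1 - tanh (h o + c) ^ 2) * d` and the magnetization is `s + tanh (h o + c) * d`. -/
theorem radial_bound {J : ι → ι → ℝ} (hJs : ∀ i j, J i j = J j i) (hJ : ∀ i j, 0 ≤ J i j)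
    {h : ι → ℝ} (hh : ∀ i, 0 ≤ h i) (o k : ι) :
    h o * -(∑ l, h l * kap J h o k l) ≤ mag J h k := by
  have hq : ∀ i, 0 ≤ rs o h i := fun i => hh i
  have hu : ∀ i, 0 ≤ bd J o i := fun i => hJ o i
  have hJr : ∀ i j, 0 ≤ Jr J o i j := fun i j => hJ i j
  have hcd := hasDerivAt_eff J o (rs o h) 1
  have hcc := eff_deriv_le hJ o hq
  have hc0 : 0 ≤ (∑ j, rs o h j * (mag (Jr J o) (bd J o + (1 : ℝ) • rs o h) j -
      mag (Jr J o) (-bd J o + (1 : ℝ) • rs o h) j)) / 2 := by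
    refine div_nonneg (Finset.sum_nonneg fun j _ => mul_nonneg (hq j) (sub_nonneg.2 ?_)) two_pos.le
    exact mag_mono hJr (fun i => abs_neg_add_le (hu i) (hq i) zero_le_one) j
  set c' := (∑ j, rs o h j * (mag (Jr J o) (bd J o + (1 : ℝ) • rs o h) j -
      mag (Jr J o) (-bd J o + (1 : ℝ) • rs o h) j)) / 2 with hc'
  have hrs : ∀ t : ℝ, rs o (t • h) = t • rs o h := fun t => rfl
  have hxd : HasDerivAt (fun t : ℝ => t * h o + eff J o (t • rs o h)) (h o + c') 1 :=
    (hasDerivAt_mul_const (h o)).add hcd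
  have hM := (hasDerivAt_tanh _).comp (1 : ℝ) hxd
  have hK := hasDerivAt_cov J 0 h o k 1
  simp only [zero_add, one_smul] at hK
  by_cases hk : k = o
  -- Here the formulas of the other case hold with `s = 0` and `d = 1`.
  · subst hk
    have hfun : (fun t : ℝ => cov J (t • h) k k) =
        fun t => 1 - Real.tanh (t * h k + eff J k (t • rs k h)) ^ 2 := by
      ext t; rw [cov_self hJs]; rfl
    rw [hfun] at hK
    have hT := hK.unique ((hM.pow 2).const_sub 1)
    have hs := scalar_bound (s := 0) (d := 1) (d' := 0) (hh k) (hc0.trans hcc) hcc le_rfl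
      zero_le_one (by
        rw [neg_zero, zero_mul, zero_add, mul_one]
        rw [Real.tanh_eq_sinh_div_cosh]
        exact div_nonneg (Real.sinh_nonneg_iff.2 (hc0.trans hcc)) (Real.cosh_pos _).le)
    rw [hT, mag_self hJs]
    simp only [one_smul, one_mul, Function.comp_apply] at hs ⊢
    refine le_trans (le_of_eq ?_) (hs.trans (le_of_eq ?_)) <;> push_cast <;> ring
  · obtain ⟨k, rfl⟩ : ∃ k' : {j // j ≠ o}, k = k' := ⟨⟨k, hk⟩, rfl⟩
    have hp := hasDerivAt_mag (Jr J o) (bd J o) (rs o h) k 1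
    have hm := hasDerivAt_mag (Jr J o) (-bd J o) (rs o h) k 1
    have hcov := sum_cov_nonneg hJr hu hq k
    set dp := ∑ j, rs o h j * cov (Jr J o) (bd J o + (1 : ℝ) • rs o h) k j
    set dm := ∑ j, rs o h j * cov (Jr J o) (-bd J o + (1 : ℝ) • rs o h) k j
    have hdom : ∀ i, |(-bd J o + (1 : ℝ) • rs o h) i| ≤ (bd J o + (1 : ℝ) • rs o h) i :=
      fun i => abs_neg_add_le (hu i) (hq i) zero_le_one
    have hs0 := mag_add_mag_nonneg hJr hdom k
    have hd0 := sub_nonneg.2 (mag_mono hJr hdom k)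
    -- With the field at `o` switched off, `mag_deriv_le` bounds the radial derivative of
    -- `s + tanh c * d`; this controls `d'` in terms of `s` and `d`.
    have hoff := mag_deriv_le hJ (q := Function.update h o 0)
      (fun i => by by_cases hi : i = o <;> simp [hi, hh]) k
    have hoffd := hasDerivAt_mag J 0 (Function.update h o 0) k 1
    have hrs0 : ∀ t : ℝ, rs o (t • Function.update h o 0) = t • rs o h := by
      intro t; ext i; simp [rs, i.2]
    have hfun0 : ∀ t : ℝ, mag J (0 + t • Function.update h o 0) k =
        (mag (Jr J o) (bd J o + t • rs o h) k + mag (Jr J o) (-bd J o + t • rs o h) k) / 2 +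
        Real.tanh (eff J o (t • rs o h)) *
        ((mag (Jr J o) (bd J o + t • rs o h) k - mag (Jr J o) (-bd J o + t • rs o h) k) / 2) := by
      intro t
      rw [zero_add, mag_other hJs, hrs0]
      simp
    rw [funext hfun0] at hoffd
    rw [hfun0, hoffd.unique (((hp.add hm).div_const 2).add
      (((hasDerivAt_tanh _).comp (1 : ℝ) hcd).mul ((hp.sub hm).div_const 2)))] at hoff
    have hfun : (fun t : ℝ => cov J (t • h) o k) =
        fun t => (1 - Real.tanh (t * h o + eff J o (t • rs o h)) ^ 2) *
        ((mag (Jr J o) (bd J o + t • rs o h) k - mag (Jr J o) (-bd J o + t • rs o h) k) / 2) := by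
      ext t; rw [cov_other hJs]; rfl
    rw [hfun] at hK
    have hT := hK.unique (((hM.pow 2).const_sub 1).mul ((hp.sub hm).div_const 2))
    have htc : 0 ≤ 1 - Real.tanh (eff J o ((1 : ℝ) • rs o h)) ^ 2 := by
      have := Real.tanh_sq_lt_one (eff J o ((1 : ℝ) • rs o h)); linarith
    have hpos := mul_nonneg (mul_nonneg htc hc0) hd0
    have hs := scalar_bound (d' := (dp - dm) / 2) (hh o) (hc0.trans hcc) hcc
      (div_nonneg hs0 two_pos.le) (div_nonneg hd0 two_pos.le) (by
        rw [Function.comp_apply] at hoff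
        linarith)
    rw [hT, mag_other hJs]
    simp only [one_smul, one_mul, Function.comp_apply, Pi.pow_apply] at hs ⊢
    refine le_trans (le_of_eq ?_) (hs.trans (le_of_eq ?_))
    · push_cast; ring
    · ring

end Ising

/-- **Lemma 2.1, second bound.** For every `k`, every `s ≥ 0` and every `h > 0` entrywise,
`|∑_j s_j ∂²m_k/∂h_1∂h_j (h)| ≤ (‖s‖_∞/ĥ) m_k(h)/h_1`. -/
theorem mixed_second_derivative_magnetization_bound
    (N : ℕ) [NeZero N]
    (J : Matrix (Fin N) (Fin N) ℝ)
    (hJsym : ∀ i j, J i j = J j i)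
    (hJnonneg : ∀ i j, 0 ≤ J i j)
    (spin : Bool → ℝ) (hspin : spin = fun b => if b then 1 else -1)
    (H : (Fin N → ℝ) → (Fin N → Bool) → ℝ)
    (hH : ∀ g σ, H g σ = -(1/2) * (∑ i, ∑ j, J i j * spin (σ i) * spin (σ j))
          - ∑ i, g i * spin (σ i))
    (m : (Fin N → ℝ) → Fin N → ℝ)
    (hm : ∀ g k, m g k =
      (∑ σ : Fin N → Bool, spin (σ k) * Real.exp (-H g σ)) /
      (∑ σ : Fin N → Bool, Real.exp (-H g σ)))
    (k : Fin N) (s : Fin N → ℝ) (hs : ∀ i, 0 ≤ s i)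
    (h : Fin N → ℝ) (hh : ∀ i, 0 < h i) :
    |∑ j, s j * pderiv' (pderiv' (fun g => m g k) j) 0 h| ≤
      ((⨆ i, |s i|) / (⨅ i, h i)) * m h k / h 0 := by
  subst hspin
  have hmag : ∀ g k, m g k = Ising.mag (fun i j => J i j) g k := by
    intro g k
    have hw : ∀ σ, Real.exp (-H g σ) = Ising.wt (fun i j => J i j) g σ := by
      intro σ
      simp only [hH, Ising.wt, Ising.sp, mul_assoc]
      congr 1
      ring
    simp only [hm, hw]
    rfl
  have hd : ∀ j, pderiv' (pderiv' (fun g => m g k) j) 0 h =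
      Ising.kap (fun i j => J i j) h 0 k j := by
    intro j
    have h1 : pderiv' (fun g => m g k) j = fun g => Ising.cov (fun i j => J i j) g k j := by
      funext g
      simp only [hmag, Ising.pderiv'_mag]
    rw [h1, Ising.pderiv'_cov, Ising.kap_rotate]
  simp only [hd]
  rw [hmag]
  -- All terms have the same sign, so each `s j` may be replaced by `‖s‖ / min h * h j`.
  have hh0 : ∀ i, 0 ≤ h i := fun i => (hh i).le
  have hκ := Ising.kap_nonpos (J := fun i j => J i j) hJnonneg hh0 0 k
  have hrad := Ising.radial_bound (J := fun i j => J i j) hJsym hJnonneg hh0 0 k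
  have hmin : 0 < ⨅ i, h i := by
    obtain ⟨i, hi⟩ := exists_eq_ciInf_of_finite (f := h)
    rw [← hi]
    exact hh i
  have hsup : ∀ j, s j ≤ ⨆ i, |s i| := fun j =>
    (le_abs_self _).trans (le_ciSup (f := fun i => |s i|) (Set.finite_range _).bddAbove j)
  have hsup0 : 0 ≤ ⨆ i, |s i| := (hs 0).trans (hsup 0)
  rw [abs_of_nonpos (Finset.sum_nonpos fun j _ => mul_nonpos_of_nonneg_of_nonpos (hs j) (hκ j)),
    mul_div_assoc]
  calc -∑ j, s j * Ising.kap (fun i j => J i j) h 0 k j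
      ≤ (⨆ i, |s i|) / (⨅ i, h i) * -∑ j, h j * Ising.kap (fun i j => J i j) h 0 k j := by
        rw [← Finset.sum_neg_distrib, ← Finset.sum_neg_distrib, Finset.mul_sum]
        refine Finset.sum_le_sum fun j _ => ?_
        rw [← mul_neg, ← mul_neg, ← mul_assoc]
        refine mul_le_mul_of_nonneg_right ((hsup j).trans ?_) (neg_nonneg.2 (hκ j))
        rw [div_mul_eq_mul_div, le_div_iff₀ hmin]
        exact mul_le_mul_of_nonneg_left (ciInf_le (Set.finite_range _).bddBelow j) hsup0
    _ ≤ (⨆ i, |s i|) / (⨅ i, h i) * (Ising.mag (fun i j => J i j) h k / h 0) := by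
        refine mul_le_mul_of_nonneg_left ?_ (div_nonneg hsup0 hmin.le)
        rw [le_div_iff₀ (hh 0), mul_comm]
        exact hrad
end

section
/- If h ∈ ℂ^N satisfies Re h_j > 0 for all j, then Z(h) ≠ 0, and the complex magnetization m_k(h) = Z(h)^{−1} Σ_σ σ_k exp((1/2)Σ_{i,j} J_{ij} σ_i σ_j + Σ_j h_j σ_j) satisfies Re m_k(h) ≥ 0 for every index k. -/
/-!
The weight of a configuration is a product of single-site factors `exp (h j * σ j)` and pair factors
`exp (J i j * σ i * σ j / 2)`. Call a weight `f` stable (`LeeYangStable`) if the multi-affine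
polynomial `∑ σ, f σ * ∏ (i with σ i = -1), u i` has no zero in the closed unit polydisc.

* The single-site weight is stable: its polynomial is `∏ j, (exp (h j) + u j * exp (-h j))`, and
  `‖exp (h j)‖ > ‖exp (-h j)‖` because `Re (h j) > 0`.
* Multiplication by a ferromagnetic pair factor preserves stability (`LeeYangStable.mul_pair`). This
  involves only the two variables of the pair: if `a + b y + c x + d x y` has no zero for
  `‖x‖, ‖y‖ ≤ 1`, then `α a + β b + β c + α d ≠ 0` for `0 < β ≤ α` (`two_site_contraction`).

Hence the Gibbs weight is stable. Evaluation at `u = 1` gives `Z ≠ 0`. Letting only the variable at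
site `k` move, with `A` and `B` the contributions of `σ k = 1` and `σ k = -1`, gives `A + B x ≠ 0` for
`‖x‖ ≤ 1`, that is `‖B‖ < ‖A‖`, and `(A - B) / (A + B)` then has positive real part.
-/

/-- A complex weight `f` on spin configurations (`true` is spin `+1`, `false` is spin `-1`) is stable
if its generating polynomial, with a variable `u i` for each negative spin, has no zero in the closed
unit polydisc. -/
def LeeYangStable {ι : Type*} [Fintype ι] [DecidableEq ι] (f : (ι → Bool) → ℂ) : Prop :=
  ∀ u : ι → ℂ, (∀ i, ‖u i‖ ≤ 1) → ∑ σ : ι → Bool, f σ * ∏ i, (if σ i then 1 else u i) ≠ 0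

lemma norm_lt_of_affine_ne_zero {A B : ℂ} (H : ∀ x : ℂ, ‖x‖ ≤ 1 → A + B * x ≠ 0) : ‖B‖ < ‖A‖ := by
  by_contra! hle
  rcases eq_or_ne B 0 with rfl | hB
  · have hA : A = 0 := by simpa using hle
    exact H 0 (by simp) (by simp [hA])
  · refine H (-A / B) ?_ (by field_simp; ring)
    rw [norm_div, norm_neg]
    exact div_le_one_of_le₀ hle (norm_nonneg _)

lemma normSq_lt_of_norm_lt {A B : ℂ} (H : ‖B‖ < ‖A‖) :
    B.re * B.re + B.im * B.im < A.re * A.re + A.im * A.im := by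
  rw [← Complex.normSq_apply, ← Complex.normSq_apply, Complex.normSq_eq_norm_sq,
    Complex.normSq_eq_norm_sq]
  gcongr

/-- The two-variable core of the Lee–Yang theorem. With `X = |a|² - |d|²` and `Y = |c|² - |b|²`, the
hypothesis gives `|Y| < X` and `‖b + d‖ < ‖a + c‖`, and the conclusion follows from the identity
`‖α a + β c‖² - ‖β b + α d‖² = α β (‖a + c‖² - ‖b + d‖²) + (α - β) (α X - β Y)`. -/
lemma two_site_contraction {a b c d : ℂ} {α β : ℝ} (hβ : 0 < β) (hαβ : β ≤ α)
    (H : ∀ x y : ℂ, ‖x‖ ≤ 1 → ‖y‖ ≤ 1 → a + b * y + c * x + d * x * y ≠ 0) :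
    α * a + β * b + β * c + α * d ≠ 0 := by
  have hx (x : ℂ) (h1 : ‖x‖ ≤ 1) : ‖b + d * x‖ < ‖a + c * x‖ :=
    norm_lt_of_affine_ne_zero fun y hy h0 => H x y h1 hy (by rw [← h0]; ring)
  have hy (y : ℂ) (h1 : ‖y‖ ≤ 1) : ‖c + d * y‖ < ‖a + b * y‖ :=
    norm_lt_of_affine_ne_zero fun x hx h0 => H x y hx h1 (by rw [← h0]; ring)
  have e1 := normSq_lt_of_norm_lt (hx 1 (by simp))
  have e2 := normSq_lt_of_norm_lt (hx (-1) (by simp))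
  have e3 := normSq_lt_of_norm_lt (hy 1 (by simp))
  have e4 := normSq_lt_of_norm_lt (hy (-1) (by simp))
  simp only [mul_one, mul_neg, Complex.add_re, Complex.add_im, Complex.neg_re, Complex.neg_im]
    at e1 e2 e3 e4
  intro h0
  have hr := congrArg Complex.re h0
  have hi := congrArg Complex.im h0
  simp only [Complex.add_re, Complex.add_im, Complex.re_ofReal_mul, Complex.im_ofReal_mul,
    Complex.zero_re, Complex.zero_im] at hr hi
  have hα : 0 < α := hβ.trans_le hαβ
  set X := a.re * a.re + a.im * a.im - (d.re * d.re + d.im * d.im) with hX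
  set Y := c.re * c.re + c.im * c.im - (b.re * b.re + b.im * b.im) with hY
  have hXY : 0 < X - Y := by rw [hX, hY]; nlinarith
  have hXY' : 0 < X + Y := by rw [hX, hY]; nlinarith
  have hXβ : 0 ≤ α * X - β * Y := by nlinarith
  have p1 := mul_pos (mul_pos hα hβ) (sub_pos.2 e1)
  have p2 := mul_nonneg (sub_nonneg.2 hαβ) hXβ
  have hr' : α * a.re + β * c.re = -(β * b.re + α * d.re) := by linarith
  have hi' : α * a.im + β * c.im = -(β * b.im + α * d.im) := by linarith
  have hr2 : (α * a.re + β * c.re) ^ 2 = (β * b.re + α * d.re) ^ 2 := by rw [hr', neg_sq]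
  have hi2 : (α * a.im + β * c.im) ^ 2 = (β * b.im + α * d.im) ^ 2 := by rw [hi', neg_sq]
  rw [hX, hY] at p2
  linarith

lemma prod_rescale {ι : Type*} [Fintype ι] [DecidableEq ι] (σ : ι → Bool) (u : ι → ℂ) (k : ι)
    (x : ℂ) :
    ∏ i, (if σ i then 1 else u i * (if i = k then x else 1)) =
      (∏ i, (if σ i then 1 else u i)) * (if σ k then 1 else x) := by
  have h : (if σ k then 1 else x) = ∏ i, (if i = k then (if σ i then 1 else x) else 1) := by
    simp
  rw [h, ← Finset.prod_mul_distrib]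
  refine Finset.prod_congr rfl fun i _ => ?_
  split_ifs <;> simp

lemma norm_rescale_le {ι : Type*} [DecidableEq ι] {u : ι → ℂ} (hu : ∀ i, ‖u i‖ ≤ 1) (k : ι)
    {x : ℂ} (hx : ‖x‖ ≤ 1) (i : ι) : ‖u i * (if i = k then x else 1)‖ ≤ 1 := by
  split_ifs
  · rw [norm_mul]
    exact mul_le_one₀ (hu i) (norm_nonneg _) hx
  · simpa using hu i

/-- A ferromagnetic pair interaction, which favours aligned spins by `β ≤ α`, preserves stability. -/
lemma LeeYangStable.mul_pair {ι : Type*} [Fintype ι] [DecidableEq ι] {f : (ι → Bool) → ℂ}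
    (hf : LeeYangStable f) (i j : ι) {α β : ℝ} (hβ : 0 < β) (hαβ : β ≤ α) :
    LeeYangStable fun σ => f σ * (if σ i = σ j then (α : ℂ) else β) := by
  intro u hu
  set g : (ι → Bool) → ℂ := fun σ => f σ * ∏ i, (if σ i then 1 else u i) with hg
  rcases eq_or_ne i j with rfl | -
  · have h : ∑ σ, g σ ≠ 0 := hf u hu
    have hα : (α : ℂ) ≠ 0 := by exact_mod_cast (hβ.trans_le hαβ).ne'
    convert mul_ne_zero hα h using 1
    rw [Finset.mul_sum]
    refine Finset.sum_congr rfl fun σ _ => ?_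
    simp only [hg, if_true]
    ring
  · have H := two_site_contraction (a := ∑ σ, if σ i ∧ σ j then g σ else 0)
      (b := ∑ σ, if σ i ∧ !σ j then g σ else 0) (c := ∑ σ, if !σ i ∧ σ j then g σ else 0)
      (d := ∑ σ, if !σ i ∧ !σ j then g σ else 0) hβ hαβ ?_
    · convert H using 1
      simp only [Finset.mul_sum, ← Finset.sum_add_distrib]
      refine Finset.sum_congr rfl fun σ _ => ?_
      simp only [hg]
      cases σ i <;> cases σ j <;> simp <;> ring
    · intro x y hx hy
      have h := hf _ (norm_rescale_le (norm_rescale_le hu i hx) j hy)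
      convert h using 1
      simp only [Finset.sum_mul, ← Finset.sum_add_distrib]
      refine Finset.sum_congr rfl fun σ _ => ?_
      rw [prod_rescale, prod_rescale]
      simp only [hg]
      cases σ i <;> cases σ j <;> simp <;> ring

lemma LeeYangStable.mul_prod_pair {ι κ : Type*} [Fintype ι] [DecidableEq ι]
    {f : (ι → Bool) → ℂ} (hf : LeeYangStable f) (s : Finset κ) (p q : κ → ι) (α β : κ → ℝ)
    (hβ : ∀ e, 0 < β e) (hαβ : ∀ e, β e ≤ α e) :
    LeeYangStable fun σ => f σ * ∏ e ∈ s, (if σ (p e) = σ (q e) then (α e : ℂ) else β e) := by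
  classical
  induction s using Finset.induction_on with
  | empty => simpa using hf
  | insert e s he ih =>
    convert ih.mul_pair (p e) (q e) (hβ e) (hαβ e) using 2 with σ
    rw [Finset.prod_insert he]
    ring

/-- Independent spins in fields of positive real part have a stable weight. -/
lemma leeYangStable_field {ι : Type*} [Fintype ι] [DecidableEq ι] {h : ι → ℂ}
    (hh : ∀ j, 0 < (h j).re) :
    LeeYangStable fun σ : ι → Bool => ∏ j, Complex.exp (h j * (if σ j then 1 else -1)) := by
  intro u hu
  have key : ∏ j, ∑ b : Bool, Complex.exp (h j * (if b then 1 else -1)) *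
      (if b then 1 else u j) ≠ 0 := by
    refine Finset.prod_ne_zero_iff.2 fun j _ h0 => ?_
    simp only [Fintype.sum_bool, if_true, Bool.false_eq_true, if_false, mul_one, mul_neg] at h0
    have h1 : ‖Complex.exp (h j)‖ = ‖Complex.exp (-h j) * u j‖ := by
      rw [eq_neg_of_add_eq_zero_left h0, norm_neg]
    rw [norm_mul, Complex.norm_exp, Complex.norm_exp, Complex.neg_re] at h1
    have h2 : Real.exp (-(h j).re) < Real.exp (h j).re := Real.exp_lt_exp.2 (by linarith [hh j])
    have h3 := mul_le_of_le_one_right (Real.exp_pos (-(h j).re)).le (hu j)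
    linarith
  rw [Finset.prod_univ_sum, Fintype.piFinset_univ] at key
  simpa only [Finset.prod_mul_distrib] using key

/-- Reading off one site of a stable weight: the sum over configurations with `σ k = -1` is strictly
smaller in modulus than the one with `σ k = 1`. -/
lemma LeeYangStable.norm_lt {ι : Type*} [Fintype ι] [DecidableEq ι] {f : (ι → Bool) → ℂ}
    (hf : LeeYangStable f) (k : ι) :
    ‖∑ σ, if σ k then 0 else f σ‖ < ‖∑ σ, if σ k then f σ else 0‖ := by
  refine norm_lt_of_affine_ne_zero fun x hx => ?_
  have h := hf _ (norm_rescale_le (u := fun _ => 1) (by simp) k hx)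
  convert h using 1
  rw [Finset.sum_mul, ← Finset.sum_add_distrib]
  refine Finset.sum_congr rfl fun σ _ => ?_
  rw [prod_rescale]
  cases σ k <;> simp

lemma re_sub_div_add_nonneg {A B : ℂ} (H : ‖B‖ < ‖A‖) : 0 ≤ ((A - B) / (A + B)).re := by
  have e := normSq_lt_of_norm_lt H
  rw [Complex.div_re, ← add_div]
  refine div_nonneg ?_ (Complex.normSq_nonneg _)
  simp only [Complex.sub_re, Complex.sub_im, Complex.add_re, Complex.add_im]
  linarith


/-- **Lee–Yang positivity.** If `Re h_j > 0` for all `j`, then the complex partition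
function `Z(h)` does not vanish, and the complex magnetization
`m_k(h) = Z(h)⁻¹ ∑_σ σ_k exp((1/2)∑ J_{ij} σ_i σ_j + ∑ h_j σ_j)` has `Re m_k(h) ≥ 0`. -/
theorem lee_yang_positive_real_part
    (N : ℕ) [NeZero N]
    (J : Matrix (Fin N) (Fin N) ℝ)
    (hJsym : ∀ i j, J i j = J j i)
    (hJnonneg : ∀ i j, 0 ≤ J i j)
    (spin : Bool → ℂ) (hspin : spin = fun b => if b then 1 else -1)
    (Z : (Fin N → ℂ) → ℂ)
    (hZ : ∀ h, Z h = ∑ σ : Fin N → Bool,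
      Complex.exp ((1/2) * (∑ i, ∑ j, (J i j : ℂ) * spin (σ i) * spin (σ j))
        + ∑ j, h j * spin (σ j)))
    (m : Fin N → (Fin N → ℂ) → ℂ)
    (hm : ∀ k h, m k h = (∑ σ : Fin N → Bool, spin (σ k) *
      Complex.exp ((1/2) * (∑ i, ∑ j, (J i j : ℂ) * spin (σ i) * spin (σ j))
        + ∑ j, h j * spin (σ j))) / Z h)
    (h : Fin N → ℂ) (hh : ∀ j, 0 < (h j).re) :
    Z h ≠ 0 ∧ ∀ k, 0 ≤ (m k h).re := by
  subst hspin
  have hstable : LeeYangStable fun σ : Fin N → Bool =>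
      Complex.exp ((1/2) * (∑ i, ∑ j, (J i j : ℂ) * (if σ i then 1 else -1) *
        (if σ j then 1 else -1)) + ∑ j, h j * (if σ j then 1 else -1)) := by
    convert (leeYangStable_field hh).mul_prod_pair (Finset.univ : Finset (Fin N × Fin N))
      Prod.fst Prod.snd (fun e => Real.exp (J e.1 e.2 / 2)) (fun e => Real.exp (-(J e.1 e.2 / 2)))
      (fun e => Real.exp_pos _)
      (fun e => Real.exp_le_exp.2 (by linarith [hJnonneg e.1 e.2])) using 2 with σ
    rw [Complex.exp_add, mul_comm, Complex.exp_sum, ← Fintype.sum_prod_type', Finset.mul_sum,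
      Complex.exp_sum]
    congr 1
    refine Finset.prod_congr rfl fun e _ => ?_
    push_cast
    cases σ e.1 <;> cases σ e.2 <;> simp <;> ring_nf
  refine ⟨?_, fun k => ?_⟩
  · rw [hZ]
    simpa using hstable (fun _ => 1) (by simp)
  · rw [hm, hZ]
    convert re_sub_div_add_nonneg (hstable.norm_lt k) using 3
    · rw [← Finset.sum_sub_distrib]
      refine Finset.sum_congr rfl fun σ _ => ?_
      cases σ k <;> simp
    · rw [← Finset.sum_add_distrib]
      refine Finset.sum_congr rfl fun σ _ => ?_
      cases σ k <;> simp
end
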